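/- arXiv:1503.07955 — 3 statements merged into one kernel-verified Lean document; each statement's English description precedes it below -/
import Mathlib

section
/- Proposition 2.1 (correlation-kernel form of the eigenvalue density, residue form). Assume a₁,…,a_N > 0 are pairwise distinct, let ξ_j(x) := Φ(−a_j;x), g_{ij} := ∫₀^∞ x^{i−1} ξ_j(x) dx for 1 ≤ i,j ≤ N, assume det[g_{ij}] ≠ 0, and set Z_N := N!·det[g_{ij}]. Define K_N(x,y) := ∫₀^∞ u^{ν₀} e^{−u} Ψ(u;x) · ( ∑_{j=1}^N Φ(−a_j;y) e^{−a_j} ∏_{l≠j} ((−u−a_l)/(a_j−a_l)) ) du for x,y > 0. Then for all (x₁,…,x_N) ∈ (0,∞)^N one has (1/Z_N)·det[x_j^{i−1}]_{i,j=1}^N · det[ξ_i(x_j)]_{i,j=1}^N = (1/N!)·det[K_N(x_i,x_j)]_{i,j=1}^N. -/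
open MeasureTheory Filter Topology

noncomputable section


/-- Pochhammer symbol `(a)_j` over `ℝ`. -/
def poch (a : ℝ) (j : ℕ) : ℝ := ∏ i ∈ Finset.range j, (a + i)

/-- The hypergeometric function `₀F₁(b; z)` for complex argument `z`. -/
def hyp0F1 (b : ℝ) (z : ℂ) : ℂ :=
  ∑' k : ℕ, (Real.Gamma b : ℂ) * z ^ k /
    ((Nat.factorial k : ℂ) * (Real.Gamma (b + k) : ℂ))

/-- The hypergeometric function `₀F₁(b; z)` for real argument `z`. -/
def hyp0F1R (b z : ℝ) : ℝ :=
  ∑' k : ℕ, Real.Gamma b * z ^ k / (Nat.factorial k * Real.Gamma (b + k))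

/-- The terminating hypergeometric sum `₁F₁(-k; b; u)`. -/
def hyp1F1T (k : ℕ) (b u : ℝ) : ℝ :=
  ∑ j ∈ Finset.range (k + 1),
    poch (-(k : ℝ)) j / (poch b j * Nat.factorial j) * u ^ j

/-- The function `Ψ(u;x)` of the paper. -/
def Psi (r ν0 : ℕ) (ν : Fin r → ℕ) (u x : ℝ) : ℝ :=
  (1 / Real.Gamma ((ν0 : ℝ) + 1)) *
    ∑' k : ℕ, x ^ k / Nat.factorial k * hyp1F1T k ((ν0 : ℝ) + 1) u *
      ∏ l, 1 / Real.Gamma ((ν l : ℝ) + 1 + k)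

/-- The positive orthant in `ℝ^r`. -/
def posOrth (r : ℕ) : Set (Fin r → ℝ) := {t | ∀ i, 0 < t i}

/-- The function `Φ(v;y)` of the paper, complex `v`. -/
def Phi (r ν0 : ℕ) (ν : Fin r → ℕ) (v : ℂ) (y : ℝ) : ℂ :=
  ((1 / Real.Gamma ((ν0 : ℝ) + 1) : ℝ) : ℂ) *
    ∫ t in posOrth r,
      (((∏ i, (t i) ^ ((ν i : ℝ) - 1) * Real.exp (-t i)) *
          (y / ∏ i, t i) ^ ν0 * Real.exp (-(y / ∏ i, t i)) : ℝ) : ℂ) *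
        hyp0F1 ((ν0 : ℝ) + 1) (-(v * ((y / ∏ i, t i : ℝ) : ℂ)))

/-- The function `Φ(v;y)` of the paper, real `v`. -/
def PhiR (r ν0 : ℕ) (ν : Fin r → ℕ) (v y : ℝ) : ℝ :=
  (1 / Real.Gamma ((ν0 : ℝ) + 1)) *
    ∫ t in posOrth r,
      ((∏ i, (t i) ^ ((ν i : ℝ) - 1) * Real.exp (-t i)) *
          (y / ∏ i, t i) ^ ν0 * Real.exp (-(y / ∏ i, t i))) *
        hyp0F1R ((ν0 : ℝ) + 1) (-(v * (y / ∏ i, t i)))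

/-- The double-contour-integral correlation kernel `K_N(x,y)` of Proposition 2.1,
with `C` the counterclockwise circle of center `c` and radius `R`. -/
def KN (r ν0 N : ℕ) (ν : Fin r → ℕ) (a : Fin N → ℝ) (c : ℂ) (R : ℝ) (x y : ℝ) : ℂ :=
  ∫ u in Set.Ioi (0 : ℝ),
    (2 * Real.pi * Complex.I)⁻¹ *
      ∮ v in C(c, R),
        (u : ℂ) ^ ν0 * Complex.exp (-(u : ℂ) + v) * ((Psi r ν0 ν u x : ℝ) : ℂ) *
          Phi r ν0 ν v y * ((u : ℂ) - v)⁻¹ * ∏ l, ((u : ℂ) + (a l : ℂ)) / (v + (a l : ℂ))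

/-- An admissible contour for `K_N`: a counterclockwise circle contained in the left
half-plane which encloses all the points `-a l`. -/
def AdmCircle (N : ℕ) (a : Fin N → ℝ) (c : ℂ) (R : ℝ) : Prop :=
  0 < R ∧ c.re + R < 0 ∧ ∀ l, ‖-(a l : ℂ) - c‖ < R

/-- The Meijer G-function `G^{1,0}_{0,r+2}(—;0,-ν₀,…,-ν_r | z)`, complex argument. -/
def G1 (r ν0 : ℕ) (ν : Fin r → ℕ) (z : ℂ) : ℂ :=
  ∑' k : ℕ, (-z) ^ k /
    ((Nat.factorial k : ℂ) * (Real.Gamma ((ν0 : ℝ) + 1 + k) : ℂ) *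
      ∏ l, (Real.Gamma ((ν l : ℝ) + 1 + k) : ℂ))

/-- The Meijer G-function `G^{1,0}_{0,r+2}(—;0,-ν₀,…,-ν_r | z)`, real argument. -/
def G1R (r ν0 : ℕ) (ν : Fin r → ℕ) (z : ℝ) : ℝ :=
  ∑' k : ℕ, (-z) ^ k /
    (Nat.factorial k * Real.Gamma ((ν0 : ℝ) + 1 + k) *
      ∏ l, Real.Gamma ((ν l : ℝ) + 1 + k))

/-- `g₀(w) = ∑ (-1)^k w^{ν₀+k}/(k! Γ(ν₀+k+1))`, complex argument. -/
def g0C (ν0 : ℕ) (w : ℂ) : ℂ :=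
  ∑' k : ℕ, (-1 : ℂ) ^ k * w ^ (ν0 + k) /
    ((Nat.factorial k : ℂ) * (Real.Gamma ((ν0 : ℝ) + k + 1) : ℂ))

/-- `g₀(w)`, real argument. -/
def g0R (ν0 : ℕ) (w : ℝ) : ℝ :=
  ∑' k : ℕ, (-1 : ℝ) ^ k * w ^ (ν0 + k) /
    (Nat.factorial k * Real.Gamma ((ν0 : ℝ) + k + 1))

/-- The Meijer G-function `G^{r+1,0}_{0,r+2}(—;ν₀,…,ν_r,0 | z)` for `z > 0`, real form. -/
def G2R (r ν0 : ℕ) (ν : Fin r → ℕ) (z : ℝ) : ℝ :=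
  ∫ t in posOrth r,
    (∏ l, (t l) ^ ((ν l : ℝ) - 1) * Real.exp (-t l)) * g0R ν0 (z / ∏ l, t l)

/-- The critical hard-edge kernel `𝒦^{h,r}(ξ,η;τ)` of Theorem 1.2, the inner integral
running up the imaginary axis `v = i t`. -/
def Kcrit (r ν0 : ℕ) (ν : Fin r → ℕ) (G2 : ℂ → ℂ) (τ ξ η : ℝ) : ℂ :=
  (2 * Real.pi * Complex.I)⁻¹ *
    ∫ u in Set.Ioi (0 : ℝ), ∫ t : ℝ,
      ((u : ℂ) / (Complex.I * t)) ^ ν0 *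
        Complex.exp (-(τ : ℂ) * u - (u : ℂ) ^ 2 / 2 + (τ : ℂ) * (Complex.I * t) +
          (Complex.I * t) ^ 2 / 2) *
        ((u : ℂ) - Complex.I * t)⁻¹ * G1 r ν0 ν ((u * ξ : ℝ) : ℂ) *
        G2 (Complex.I * t * (η : ℂ)) * Complex.I

/-- The deformed critical kernel `𝒦^{h,r}_m(ξ,η;τ,σ)` of Theorem 1.3, the inner integral
running up the vertical line `Re v = -c`. -/
def KcritLine (r ν0 m : ℕ) (ν : Fin r → ℕ) (σ : ℕ → ℝ) (G2 : ℂ → ℂ) (c τ ξ η : ℝ) : ℂ :=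
  (2 * Real.pi * Complex.I)⁻¹ *
    ∫ u in Set.Ioi (0 : ℝ), ∫ t : ℝ,
      ((u : ℂ) / (-(c : ℂ) + Complex.I * t)) ^ ν0 *
        Complex.exp (-(τ : ℂ) * u - (u : ℂ) ^ 2 / 2 +
          (τ : ℂ) * (-(c : ℂ) + Complex.I * t) + (-(c : ℂ) + Complex.I * t) ^ 2 / 2) *
        ((u : ℂ) - (-(c : ℂ) + Complex.I * t))⁻¹ *
        (∏ j ∈ Finset.range m,
          ((u : ℂ) + (σ j : ℂ)) / ((-(c : ℂ) + Complex.I * t) + (σ j : ℂ))) *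
        G1 r ν0 ν ((u * ξ : ℝ) : ℂ) * G2 ((-(c : ℂ) + Complex.I * t) * (η : ℂ)) * Complex.I




/-- `Ψ(u;x)` in the case `r = 0`. -/
def Psi0 (ν0 : ℕ) (u x : ℝ) : ℝ :=
  Real.exp x * hyp0F1R ((ν0 : ℝ) + 1) (-(u * x)) / Real.Gamma ((ν0 : ℝ) + 1)

/-- `Φ(v;y)` in the case `r = 0`, complex `v`. -/
def Phi0 (ν0 : ℕ) (v : ℂ) (y : ℝ) : ℂ :=
  ((y ^ ν0 * Real.exp (-y) / Real.Gamma ((ν0 : ℝ) + 1) : ℝ) : ℂ) *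
    hyp0F1 ((ν0 : ℝ) + 1) (-(v * (y : ℂ)))

/-- The kernel `K_N` in the case `r = 0`. -/
def KN0 (ν0 N : ℕ) (a : Fin N → ℝ) (c : ℂ) (R : ℝ) (x y : ℝ) : ℂ :=
  ∫ u in Set.Ioi (0 : ℝ),
    (2 * Real.pi * Complex.I)⁻¹ *
      ∮ v in C(c, R),
        (u : ℂ) ^ ν0 * Complex.exp (-(u : ℂ) + v) * ((Psi0 ν0 u x : ℝ) : ℂ) *
          Phi0 ν0 v y * ((u : ℂ) - v)⁻¹ * ∏ l, ((u : ℂ) + (a l : ℂ)) / (v + (a l : ℂ))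

/-- Laguerre polynomial `L_n^{ν}(x)`. -/
def laguerreL (n νp : ℕ) (x : ℝ) : ℝ :=
  ∑ k ∈ Finset.range (n + 1),
    (-1 : ℝ) ^ k * (Nat.choose (n + νp) (n - k)) * x ^ k / Nat.factorial k

/-- The function `Ψ^{(μ)}(u;x)` of Section 4. -/
def PsiMu (r ν0 : ℕ) (μ ν : Fin r → ℕ) (u x : ℝ) : ℝ :=
  (1 / Real.Gamma ((ν0 : ℝ) + 1)) *
    ∑' k : ℕ, x ^ k / Nat.factorial k * hyp1F1T k ((ν0 : ℝ) + 1) u *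
      ∏ l, Real.Gamma ((μ l : ℝ) + 1 + k) / Real.Gamma ((ν l : ℝ) + 1 + k)

/-- The open unit cube in `ℝ^r`. -/
def unitCube (r : ℕ) : Set (Fin r → ℝ) := {t | ∀ i, 0 < t i ∧ t i < 1}

/-- The function `Φ^{(μ)}(v;y)` of Section 4, complex `v`. -/
def PhiMu (r ν0 : ℕ) (μ ν : Fin r → ℕ) (v : ℂ) (y : ℝ) : ℂ :=
  ((1 / (Real.Gamma ((ν0 : ℝ) + 1) * ∏ l, Real.Gamma ((μ l : ℝ) - (ν l : ℝ))) : ℝ) : ℂ) *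
    ∫ t in unitCube r,
      (((∏ l, (t l) ^ ((ν l : ℝ) - 1) * (1 - t l) ^ ((μ l : ℝ) - (ν l : ℝ) - 1)) *
          (y / ∏ l, t l) ^ ν0 * Real.exp (-(y / ∏ l, t l)) : ℝ) : ℂ) *
        hyp0F1 ((ν0 : ℝ) + 1) (-(v * ((y / ∏ l, t l : ℝ) : ℂ)))

/-- The function `Φ^{(μ)}(v;y)` of Section 4, real `v`. -/
def PhiMuR (r ν0 : ℕ) (μ ν : Fin r → ℕ) (v y : ℝ) : ℝ :=
  (1 / (Real.Gamma ((ν0 : ℝ) + 1) * ∏ l, Real.Gamma ((μ l : ℝ) - (ν l : ℝ)))) *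
    ∫ t in unitCube r,
      ((∏ l, (t l) ^ ((ν l : ℝ) - 1) * (1 - t l) ^ ((μ l : ℝ) - (ν l : ℝ) - 1)) *
          (y / ∏ l, t l) ^ ν0 * Real.exp (-(y / ∏ l, t l))) *
        hyp0F1R ((ν0 : ℝ) + 1) (-(v * (y / ∏ l, t l)))

/-- The kernel `K_N` for the truncated-unitary product of Section 4. -/
def KNmu (r ν0 N : ℕ) (μ ν : Fin r → ℕ) (a : Fin N → ℝ) (c : ℂ) (R : ℝ) (x y : ℝ) : ℂ :=
  ∫ u in Set.Ioi (0 : ℝ),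
    (2 * Real.pi * Complex.I)⁻¹ *
      ∮ v in C(c, R),
        (u : ℂ) ^ ν0 * Complex.exp (-(u : ℂ) + v) * ((PsiMu r ν0 μ ν u x : ℝ) : ℂ) *
          PhiMu r ν0 μ ν v y * ((u : ℂ) - v)⁻¹ * ∏ l, ((u : ℂ) + (a l : ℂ)) / (v + (a l : ℂ))

/-- Mixed domain `(0,1)^q × (0,∞)^{r-q}`. -/
def mixedSet (r q : ℕ) : Set (Fin r → ℝ) := {t | ∀ l, 0 < t l ∧ ((l : ℕ) < q → t l < 1)}

/-- The Meijer G-function `G^{1,q}_{q,r+2}(-μ₁,…,-μ_q; 0,-ν₀,…,-ν_r | z)`, real form. -/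
def G1qR (r ν0 q : ℕ) (μ ν : Fin r → ℕ) (z : ℝ) : ℝ :=
  ∑' k : ℕ, (-z) ^ k *
    (∏ l ∈ Finset.univ.filter fun l : Fin r => (l : ℕ) < q, Real.Gamma ((μ l : ℝ) + 1 + k)) /
    (Nat.factorial k * Real.Gamma ((ν0 : ℝ) + 1 + k) *
      ∏ l, Real.Gamma ((ν l : ℝ) + 1 + k))

/-- The Meijer G-function `G^{1,q}_{q,r+2}(-μ₁,…,-μ_q; 0,-ν₀,…,-ν_r | z)`, complex form. -/
def G1q (r ν0 q : ℕ) (μ ν : Fin r → ℕ) (z : ℂ) : ℂ :=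
  ∑' k : ℕ, (-z) ^ k *
    ((∏ l ∈ Finset.univ.filter fun l : Fin r => (l : ℕ) < q,
      Real.Gamma ((μ l : ℝ) + 1 + k) : ℝ) : ℂ) /
    ((Nat.factorial k : ℂ) * (Real.Gamma ((ν0 : ℝ) + 1 + k) : ℂ) *
      ∏ l, (Real.Gamma ((ν l : ℝ) + 1 + k) : ℂ))

/-- The Meijer G-function `G^{r+1,0}_{q,r+2}(μ₁,…,μ_q; ν₀,…,ν_r,0 | z)` for `z > 0`. -/
def G2qR (r ν0 q : ℕ) (μ ν : Fin r → ℕ) (z : ℝ) : ℝ :=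
  ∫ t in mixedSet r q,
    (∏ l : Fin r, if l.val < q then
        (t l) ^ ((ν l : ℝ) - 1) * (1 - t l) ^ ((μ l : ℝ) - (ν l : ℝ) - 1) /
          Real.Gamma ((μ l : ℝ) - (ν l : ℝ))
      else (t l) ^ ((ν l : ℝ) - 1) * Real.exp (-t l)) *
      g0R ν0 (z / ∏ l, t l)

/-!
The polynomials `ℓ_k = ₁F₁(-k; ν₀ + 1; ·)` are orthogonal for the weight `u^ν₀ e^{-u}`, and
`Ψ(·; x)` is a series in them whose `i`-th coefficient is, up to a product of Gamma values, `x^i`.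
Up to the same Gamma values the `i`-th moment of `Φ(v; ·)` is `ℓ_i(v) e^{-v}`: Mellin transforms
turn the `t`-integrals into Gamma factors, and the remaining moment of `₀F₁` is an exponential sum
of values of a polynomial, which Newton's forward difference formula evaluates. Since `ℓ_i` with
`i < N` is reproduced by Lagrange interpolation at the nodes `-a_j`, integrating `Ψ(u; x)` against
the `j`-th Lagrange basis polynomial gives functions `η_j` with `∑_j g_ij η_j(x) = x^i`, whereas
`K_N(x, y) = ∑_j η_j(x) Φ(-a_j; y)`. So the Vandermonde matrix is `g` times `(η_i(x_j))`, the kernel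
matrix is the transpose of `(η_i(x_j))` times `(ξ_i(x_j))`, and the claim compares determinants.
-/

section Pochhammer

open fwdDiff Finset

lemma poch_add (b : ℝ) (j m : ℕ) : poch b (j + m) = poch b j * poch (b + j) m := by
  simp only [poch, prod_range_add, Nat.cast_add, add_assoc]

lemma poch_pos {b : ℝ} (hb : 0 < b) (j : ℕ) : 0 < poch b j :=
  prod_pos fun _ _ => by positivity

lemma poch_neg_natCast (k j : ℕ) : poch (-(k : ℝ)) j = (-1) ^ j * k.descFactorial j := by
  induction j with
  | zero => simp [poch]
  | succ j ih =>
    have hstep : poch (-(k : ℝ)) (j + 1) = poch (-(k : ℝ)) j * (-k + j) := prod_range_succ _ _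
    rw [hstep, ih, Nat.descFactorial_succ]
    rcases le_or_gt j k with hjk | hkj
    · push_cast [hjk]
      ring
    · simp [Nat.descFactorial_of_lt hkj]

lemma Gamma_add_natCast_eq_poch {b : ℝ} (hb : 0 < b) (n : ℕ) :
    Real.Gamma (b + n) = poch b n * Real.Gamma b := by
  induction n with
  | zero => simp [poch]
  | succ n ih =>
    have hstep : poch b (n + 1) = poch b n * (b + n) := prod_range_succ _ _
    rw [Nat.cast_succ, ← add_assoc, Real.Gamma_add_one (by positivity), ih, hstep]
    ring

lemma factorial_le_poch {b : ℝ} (hb : 1 ≤ b) (k : ℕ) : (k.factorial : ℝ) ≤ poch b k := by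
  rw [← prod_range_add_one_eq_factorial]
  push_cast
  exact prod_le_prod (fun _ _ => by positivity) fun i _ => by linarith

lemma fwdDiff_poch_succ (m : ℕ) :
    Δ_[1] (fun x : ℝ => poch x (m + 1)) = fun x => (m + 1) * poch (x + 1) m := by
  funext x
  have hleft : poch x (m + 1) = x * poch (x + 1) m := by
    rw [add_comm m, poch_add]
    simp [poch]
  have hright : poch (x + 1) (m + 1) = poch (x + 1) m * (x + 1 + m) := prod_range_succ _ _
  rw [fwdDiff, hleft, hright]
  ring

lemma fwdDiff_iter_poch (k m : ℕ) (x : ℝ) :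
    Δ_[1] ^[k] (fun x => poch x m) x = m.descFactorial k * poch (x + k) (m - k) := by
  induction k generalizing m x with
  | zero => simp
  | succ k ih =>
    rw [Function.iterate_succ_apply]
    cases m with
    | zero => simp [poch, fwdDiff_iter_eq_sum_shift]
    | succ m =>
      have hsmul : (fun x : ℝ => ((m : ℝ) + 1) * poch (x + 1) m) =
        ((m : ℝ) + 1) • fun x => poch (x + 1) m := rfl
      rw [fwdDiff_poch_succ, hsmul, fwdDiff_iter_const_smul, Pi.smul_apply,
        fwdDiff_iter_comp_add 1 (fun x => poch x m), ih, Nat.succ_descFactorial_succ,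
        Nat.add_sub_add_right]
      push_cast
      rw [smul_eq_mul, add_assoc, add_comm 1 (k : ℝ), mul_assoc]

end Pochhammer

section ExponentialNewtonSeries

open fwdDiff Finset Nat

lemma hasSum_pow_div_factorial_mul_choose (a : ℝ) (j : ℕ) :
    HasSum (fun k : ℕ => a ^ k / k ! * k.choose j) (a ^ j / j ! * Real.exp a) := by
  rw [← hasSum_nat_add_iff' j]
  have hlow : ∑ k ∈ range j, a ^ k / k ! * k.choose j = 0 :=
    sum_eq_zero fun k hk => by simp [choose_eq_zero_of_lt (mem_range.mp hk)]
  have hexp : HasSum (fun k : ℕ => a ^ k / k !) (Real.exp a) := by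
    simpa [Real.exp_eq_exp_ℝ] using NormedSpace.expSeries_div_hasSum_exp a
  rw [hlow, sub_zero]
  refine (hexp.mul_left _).congr_fun fun k => ?_
  rw [cast_choose ℝ (le_add_left j k), Nat.add_sub_cancel]
  have : ((k + j)! : ℝ) ≠ 0 := by positivity
  field_simp
  ring

lemma hasSum_pow_div_factorial_mul_shift {f : ℝ → ℝ} {y : ℝ} {d : ℕ}
    (hf : ∀ j, d < j → Δ_[1] ^[j] f y = 0) (a : ℝ) :
    HasSum (fun k : ℕ => a ^ k / k ! * f (y + k))
      (Real.exp a * ∑ j ∈ range (d + 1), a ^ j / j ! * Δ_[1] ^[j] f y) := by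
  have hnewton (k : ℕ) : f (y + k) = ∑ j ∈ range (d + 1), k.choose j * Δ_[1] ^[j] f y := by
    have h := shift_eq_sum_fwdDiff_iter (1 : ℝ) f k y
    simp only [nsmul_eq_mul, mul_one] at h
    rw [h]
    refine sum_congr_of_eq_on_inter (fun j _ hj => ?_) (fun j _ hj => ?_) fun _ _ _ => rfl
    · rw [hf j (by simpa [Nat.lt_succ_iff] using hj), mul_zero]
    · simp [choose_eq_zero_of_lt (n := k) (k := j) (by simpa [Nat.lt_succ_iff] using hj)]
  have hsum := hasSum_sum fun j (_ : j ∈ range (d + 1)) =>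
    (hasSum_pow_div_factorial_mul_choose a j).mul_right (Δ_[1] ^[j] f y)
  simp_rw [hnewton, mul_sum, ← mul_assoc, mul_comm (Real.exp a)]
  exact hsum

end ExponentialNewtonSeries

section TermwiseIntegration

variable {α : Type*} [MeasurableSpace α] {μ : Measure α}

lemma integrable_tsum_of_summable_integral_norm {ι : Type*} [Countable ι] {F : ι → α → ℝ}
    (hF : ∀ i, Integrable (F i) μ) (hsum : Summable fun i => ∫ x, ‖F i x‖ ∂μ) :
    Integrable (fun x => ∑' i, F i x) μ := by
  refine ⟨AEStronglyMeasurable.tsum fun i => (hF i).1, ?_⟩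
  calc ∫⁻ x, ‖∑' i, F i x‖ₑ ∂μ
      ≤ ∫⁻ x, ∑' i, ‖F i x‖ₑ ∂μ := lintegral_mono fun x => enorm_tsum_le_tsum_enorm
    _ = ∑' i, ∫⁻ x, ‖F i x‖ₑ ∂μ := lintegral_tsum fun i => (hF i).1.enorm
    _ = ∑' i, ENNReal.ofReal (∫ x, ‖F i x‖ ∂μ) := by
      simp only [ofReal_integral_norm_eq_lintegral_enorm (hF _)]
    _ < ⊤ := hsum.tsum_ofReal_lt_top

variable {f : ℕ → α → ℝ} {g : α → ℝ} {c : ℕ → ℝ} {C : ℝ}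

lemma summable_integral_norm_mul_of_memLp_two (hc : Summable fun k => |c k|)
    (hf : ∀ k, MemLp (f k) 2 μ) (hC : ∀ k, ∫ x, f k x ^ 2 ∂μ ≤ C) (hg : MemLp g 2 μ) :
    Summable fun k => ∫ x, ‖c k * f k x * g x‖ ∂μ := by
  have hbound (k : ℕ) : ∫ x, ‖f k x * g x‖ ∂μ ≤ (C + ∫ x, g x ^ 2 ∂μ) / 2 := by
    calc ∫ x, ‖f k x * g x‖ ∂μ
        ≤ ∫ x, (f k x ^ 2 + g x ^ 2) / 2 ∂μ := by
          refine integral_mono ((hf k).integrable_mul hg).norm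
            (((hf k).integrable_sq.add hg.integrable_sq).div_const 2) fun x => ?_
          simp only [Real.norm_eq_abs, abs_mul]
          nlinarith [sq_nonneg (|f k x| - |g x|), sq_abs (f k x), sq_abs (g x)]
      _ = (∫ x, f k x ^ 2 ∂μ + ∫ x, g x ^ 2 ∂μ) / 2 := by
          rw [integral_div, integral_add (hf k).integrable_sq hg.integrable_sq]
      _ ≤ (C + ∫ x, g x ^ 2 ∂μ) / 2 := by gcongr; exact hC k
  refine (hc.mul_right ((C + ∫ x, g x ^ 2 ∂μ) / 2)).of_nonneg_of_le (fun k => by positivity)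
    fun k => ?_
  simp only [mul_assoc, norm_mul (c k), integral_const_mul]
  exact mul_le_mul_of_nonneg_left (hbound k) (abs_nonneg _)

lemma integrable_tsum_mul_of_memLp_two (hc : Summable fun k => |c k|)
    (hf : ∀ k, MemLp (f k) 2 μ) (hC : ∀ k, ∫ x, f k x ^ 2 ∂μ ≤ C) (hg : MemLp g 2 μ) :
    Integrable (fun x => (∑' k, c k * f k x) * g x) μ := by
  simp only [← tsum_mul_right]
  exact integrable_tsum_of_summable_integral_norm
    (fun k => ((hf k).const_mul (c k)).integrable_mul hg)
    (summable_integral_norm_mul_of_memLp_two hc hf hC hg)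

lemma hasSum_integral_tsum_mul_of_memLp_two (hc : Summable fun k => |c k|)
    (hf : ∀ k, MemLp (f k) 2 μ) (hC : ∀ k, ∫ x, f k x ^ 2 ∂μ ≤ C) (hg : MemLp g 2 μ) :
    HasSum (fun k => c k * ∫ x, f k x * g x ∂μ) (∫ x, (∑' k, c k * f k x) * g x ∂μ) := by
  simp only [← tsum_mul_right, ← integral_const_mul, ← mul_assoc]
  exact hasSum_integral_of_summable_integral_norm
    (fun k => ((hf k).const_mul (c k)).integrable_mul hg)
    (summable_integral_norm_mul_of_memLp_two hc hf hC hg)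

end TermwiseIntegration

section GammaMeasure

open ProbabilityTheory Polynomial Set

lemma gammaMeasure_one_eq_withDensity (b : ℝ) :
    gammaMeasure b 1 = (volume.restrict (Ioi 0)).withDensity
      fun u => ENNReal.ofReal ((Real.Gamma b)⁻¹ * (u ^ (b - 1) * Real.exp (-u))) := by
  rw [← withDensity_indicator measurableSet_Ioi]
  refine withDensity_congr_ae ?_
  filter_upwards [Measure.ae_ne volume 0] with u hu
  rcases hu.lt_or_gt with hneg | hpos
  · rw [gammaPDF_of_neg hneg, indicator_of_notMem (notMem_Ioi.2 hneg.le)]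
  · rw [gammaPDF_of_nonneg hpos.le, indicator_of_mem (mem_Ioi.2 hpos)]
    simp [mul_assoc]

variable {b : ℝ}

lemma toReal_ofReal_gammaDensity (hb : 0 < b) {u : ℝ} (hu : 0 < u) :
    (ENNReal.ofReal ((Real.Gamma b)⁻¹ * (u ^ (b - 1) * Real.exp (-u)))).toReal =
      (Real.Gamma b)⁻¹ * (u ^ (b - 1) * Real.exp (-u)) :=
  ENNReal.toReal_ofReal (by positivity)

lemma integral_gammaMeasure (hb : 0 < b) (f : ℝ → ℝ) :
    ∫ u, f u ∂gammaMeasure b 1 =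
      (Real.Gamma b)⁻¹ * ∫ u in Ioi 0, u ^ (b - 1) * Real.exp (-u) * f u := by
  rw [gammaMeasure_one_eq_withDensity,
    integral_withDensity_eq_integral_toReal_smul (by fun_prop) (by simp), ← integral_const_mul]
  refine setIntegral_congr_fun measurableSet_Ioi fun u hu => ?_
  simp only [toReal_ofReal_gammaDensity hb hu, smul_eq_mul, mul_assoc]

lemma integrable_gammaMeasure_iff (hb : 0 < b) (f : ℝ → ℝ) :
    Integrable f (gammaMeasure b 1) ↔
      IntegrableOn (fun u => u ^ (b - 1) * Real.exp (-u) * f u) (Ioi 0) := by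
  rw [gammaMeasure_one_eq_withDensity,
    integrable_withDensity_iff_integrable_smul' (by fun_prop) (by simp)]
  have hcongr : IntegrableOn (fun u => (ENNReal.ofReal ((Real.Gamma b)⁻¹ *
      (u ^ (b - 1) * Real.exp (-u)))).toReal • f u) (Ioi 0) ↔
      IntegrableOn (fun u => (Real.Gamma b)⁻¹ * (u ^ (b - 1) * Real.exp (-u) * f u)) (Ioi 0) :=
    integrableOn_congr_fun (fun u hu => by
      simp only [toReal_ofReal_gammaDensity hb hu, smul_eq_mul, mul_assoc]) measurableSet_Ioi
  exact hcongr.trans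
    (integrable_const_mul_iff (inv_ne_zero (Real.Gamma_pos_of_pos hb).ne').isUnit _)

lemma integral_gammaMeasure_natCast_add_one (n : ℕ) (f : ℝ → ℝ) :
    ∫ u, f u ∂gammaMeasure (n + 1) 1 =
      (Real.Gamma (n + 1))⁻¹ * ∫ u in Ioi 0, u ^ n * Real.exp (-u) * f u := by
  simp [integral_gammaMeasure (b := n + 1) (by positivity)]

lemma integrable_gammaMeasure_natCast_add_one_iff (n : ℕ) (f : ℝ → ℝ) :
    Integrable f (gammaMeasure (n + 1) 1) ↔
      IntegrableOn (fun u => u ^ n * Real.exp (-u) * f u) (Ioi 0) := by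
  simp [integrable_gammaMeasure_iff (b := n + 1) (by positivity)]

lemma rpow_mul_exp_neg_mul_pow_eqOn (b : ℝ) (m : ℕ) :
    EqOn (fun u => u ^ (b - 1) * Real.exp (-u) * u ^ m)
      (fun u => Real.exp (-u) * u ^ (b + m - 1)) (Ioi 0) := fun u hu => by
  dsimp only
  rw [show b + m - 1 = b - 1 + m by ring, Real.rpow_add hu, Real.rpow_natCast]
  ring

lemma integrableOn_rpow_mul_exp_neg_mul_pow {m : ℕ} (hbm : 0 < b + m) :
    IntegrableOn (fun u => u ^ (b - 1) * Real.exp (-u) * u ^ m) (Ioi 0) :=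
  (integrableOn_congr_fun (rpow_mul_exp_neg_mul_pow_eqOn b m) measurableSet_Ioi).2
    (Real.GammaIntegral_convergent hbm)

lemma integral_rpow_mul_exp_neg_mul_pow {m : ℕ} (hbm : 0 < b + m) :
    ∫ u in Ioi 0, u ^ (b - 1) * Real.exp (-u) * u ^ m = Real.Gamma (b + m) := by
  rw [setIntegral_congr_fun measurableSet_Ioi (rpow_mul_exp_neg_mul_pow_eqOn b m),
    Real.Gamma_eq_integral hbm]

lemma integrable_pow_gammaMeasure (hb : 0 < b) (m : ℕ) :
    Integrable (fun u => u ^ m) (gammaMeasure b 1) :=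
  (integrable_gammaMeasure_iff hb _).2 (integrableOn_rpow_mul_exp_neg_mul_pow (by positivity))

lemma integral_pow_gammaMeasure (hb : 0 < b) (m : ℕ) :
    ∫ u, u ^ m ∂gammaMeasure b 1 = poch b m := by
  rw [integral_gammaMeasure hb, integral_rpow_mul_exp_neg_mul_pow (by positivity),
    Gamma_add_natCast_eq_poch hb]
  field_simp [(Real.Gamma_pos_of_pos hb).ne']

lemma integrable_eval_gammaMeasure (hb : 0 < b) (P : ℝ[X]) :
    Integrable (fun u => P.eval u) (gammaMeasure b 1) := by
  simp only [eval_eq_sum_range]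
  exact integrable_finsetSum _ fun m _ => (integrable_pow_gammaMeasure hb m).const_mul _

lemma memLp_two_eval_gammaMeasure (hb : 0 < b) (P : ℝ[X]) :
    MemLp (fun u => P.eval u) 2 (gammaMeasure b 1) := by
  have hsq := integrable_eval_gammaMeasure hb (P ^ 2)
  simp only [eval_pow] at hsq
  exact (memLp_two_iff_integrable_sq P.continuous.aestronglyMeasurable).2 hsq

end GammaMeasure

section KummerPolynomial

open fwdDiff Finset Nat Polynomial ProbabilityTheory

/-- The Kummer polynomial `₁F₁(-k; b; X)`, a multiple of the generalized Laguerre polynomial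
`L_k^{(b-1)}`; `poch (-k) j = (-1)^j (k choose j) j!` turns the hypergeometric coefficients into
binomial ones. -/
def kummerPoly (b : ℝ) (k : ℕ) : ℝ[X] :=
  ∑ j ∈ range (k + 1), C ((-1) ^ j * k.choose j / poch b j) * X ^ j

lemma eval_kummerPoly (b : ℝ) (k : ℕ) (u : ℝ) :
    (kummerPoly b k).eval u =
      ∑ j ∈ range (k + 1), (-1) ^ j * k.choose j / poch b j * u ^ j := by
  simp [kummerPoly, eval_finsetSum]

lemma hyp1F1T_eq_eval_kummerPoly (b : ℝ) (k : ℕ) (u : ℝ) :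
    hyp1F1T k b u = (kummerPoly b k).eval u := by
  rw [hyp1F1T, eval_kummerPoly]
  refine sum_congr rfl fun j _ => ?_
  rw [poch_neg_natCast, descFactorial_eq_factorial_mul_choose]
  push_cast
  field_simp

lemma natDegree_kummerPoly_le (b : ℝ) (k : ℕ) : (kummerPoly b k).natDegree ≤ k :=
  natDegree_sum_le_of_forall_le _ _ fun j hj =>
    (natDegree_C_mul_X_pow_le _ _).trans (by simpa [Nat.lt_succ_iff] using hj)

lemma coeff_kummerPoly_self (b : ℝ) (k : ℕ) :
    (kummerPoly b k).coeff k = (-1) ^ k / poch b k := by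
  simp [kummerPoly]

variable {b : ℝ}

-- The moments of `kummerPoly b k` are `k`-th finite differences, hence vanish for `m < k`.
lemma integral_pow_mul_kummerPoly (hb : 0 < b) (m k : ℕ) :
    ∫ u, u ^ m * (kummerPoly b k).eval u ∂gammaMeasure b 1 =
      (-1) ^ k * (m.descFactorial k * poch (b + k) (m - k)) := by
  have hterm (j : ℕ) : ∫ u, (-1) ^ j * k.choose j / poch b j * u ^ (m + j) ∂gammaMeasure b 1 =
      (-1) ^ j * k.choose j * poch (b + j) m := by
    rw [integral_const_mul, integral_pow_gammaMeasure hb, add_comm m, poch_add]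
    field_simp [(poch_pos hb j).ne']
  have hsign {j : ℕ} (hj : j ∈ range (k + 1)) : (-1 : ℝ) ^ j = (-1) ^ k * (-1) ^ (k - j) := by
    rw [← pow_add, neg_one_pow_congr]
    grind
  calc ∫ u, u ^ m * (kummerPoly b k).eval u ∂gammaMeasure b 1
      = ∫ u, ∑ j ∈ range (k + 1), (-1) ^ j * k.choose j / poch b j * u ^ (m + j)
          ∂gammaMeasure b 1 := by
        simp only [eval_kummerPoly, mul_sum, pow_add, mul_left_comm]
    _ = ∑ j ∈ range (k + 1), (-1) ^ j * k.choose j * poch (b + j) m := by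
        rw [integral_finsetSum _ fun j _ => (integrable_pow_gammaMeasure hb _).const_mul _]
        simp only [hterm]
    _ = (-1) ^ k * Δ_[1] ^[k] (fun x => poch x m) b := by
        rw [fwdDiff_iter_eq_sum_shift, mul_sum]
        refine sum_congr rfl fun j hj => ?_
        rw [hsign hj]
        simp [mul_assoc]
    _ = (-1) ^ k * (m.descFactorial k * poch (b + k) (m - k)) := by rw [fwdDiff_iter_poch]

lemma integral_eval_mul_kummerPoly (hb : 0 < b) {P : ℝ[X]} {k : ℕ} (hP : P.natDegree ≤ k) :
    ∫ u, P.eval u * (kummerPoly b k).eval u ∂gammaMeasure b 1 =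
      (-1) ^ k * k ! * P.coeff k := by
  have hint (m : ℕ) : Integrable (fun u => P.coeff m * (u ^ m * (kummerPoly b k).eval u))
      (gammaMeasure b 1) := by
    have h := integrable_eval_gammaMeasure hb (C (P.coeff m) * (X ^ m * kummerPoly b k))
    simpa only [eval_mul, eval_C, eval_pow, eval_X] using h
  simp only [eval_eq_sum_range' (Nat.lt_succ_of_le hP), sum_mul, mul_assoc]
  rw [integral_finsetSum _ fun m _ => hint m]
  simp only [integral_const_mul, integral_pow_mul_kummerPoly hb]
  rw [sum_eq_single_of_mem k (self_mem_range_succ k) fun m hm hmk => ?_]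
  · simp [descFactorial_self, poch]
    ring
  · rw [descFactorial_of_lt (by grind)]
    simp

lemma integral_kummerPoly_mul_kummerPoly (hb : 0 < b) (k i : ℕ) :
    ∫ u, (kummerPoly b k).eval u * (kummerPoly b i).eval u ∂gammaMeasure b 1 =
      if k = i then i ! / poch b i else 0 := by
  rcases lt_trichotomy k i with hlt | rfl | hgt
  · rw [integral_eval_mul_kummerPoly hb ((natDegree_kummerPoly_le b k).trans hlt.le),
      coeff_eq_zero_of_natDegree_lt ((natDegree_kummerPoly_le b k).trans_lt hlt), if_neg hlt.ne,
      mul_zero]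
  · rw [integral_eval_mul_kummerPoly hb (natDegree_kummerPoly_le b k), coeff_kummerPoly_self,
      if_pos rfl]
    have hsq : (-1 : ℝ) ^ k * (-1) ^ k = 1 := by rw [← mul_pow]; simp
    linear_combination (k ! / poch b k : ℝ) * hsq
  · simp only [mul_comm ((kummerPoly b k).eval _)]
    rw [integral_eval_mul_kummerPoly hb ((natDegree_kummerPoly_le b i).trans hgt.le),
      coeff_eq_zero_of_natDegree_lt ((natDegree_kummerPoly_le b i).trans_lt hgt), if_neg hgt.ne',
      mul_zero]

lemma integral_kummerPoly_sq_le_one (hb : 1 ≤ b) (k : ℕ) :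
    ∫ u, (kummerPoly b k).eval u ^ 2 ∂gammaMeasure b 1 ≤ 1 := by
  have hb0 : 0 < b := one_pos.trans_le hb
  simp only [sq]
  rw [integral_kummerPoly_mul_kummerPoly hb0, if_pos rfl]
  exact div_le_one_of_le₀ (factorial_le_poch hb k) (poch_pos hb0 k).le

lemma sum_pow_div_factorial_mul_fwdDiff_iter_poch (hb : 0 < b) (a : ℝ) (i : ℕ) :
    ∑ j ∈ range (i + 1), a ^ j / j ! * Δ_[1] ^[j] (fun x => poch x i) b =
      poch b i * (kummerPoly b i).eval (-a) := by
  rw [eval_kummerPoly, mul_sum]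
  refine sum_congr rfl fun j hj => ?_
  have hsplit : poch b i = poch b j * poch (b + j) (i - j) := by
    rw [← poch_add, Nat.add_sub_cancel' (by grind)]
  rw [fwdDiff_iter_poch, descFactorial_eq_factorial_mul_choose, hsplit, neg_pow a]
  have hsq : (-1 : ℝ) ^ j * (-1) ^ j = 1 := by rw [← mul_pow]; simp
  push_cast
  field_simp [(poch_pos hb j).ne']
  linear_combination -(a ^ j * i.choose j * poch (b + j) (i - j)) * hsq

lemma hasSum_pow_div_factorial_mul_poch (hb : 0 < b) (a : ℝ) (i : ℕ) :
    HasSum (fun k : ℕ => a ^ k / k ! * poch (b + k) i)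
      (Real.exp a * (poch b i * (kummerPoly b i).eval (-a))) := by
  rw [← sum_pow_div_factorial_mul_fwdDiff_iter_poch hb]
  refine hasSum_pow_div_factorial_mul_shift (f := fun x => poch x i) (fun j hj => ?_) a
  rw [fwdDiff_iter_poch, descFactorial_of_lt hj]
  simp

end KummerPolynomial

section GammaExpectationHyp0F1

open Nat ProbabilityTheory Set

variable {b : ℝ}

lemma hyp0F1R_eq_tsum_poch (hb : 0 < b) (z : ℝ) :
    hyp0F1R b z = ∑' k : ℕ, z ^ k / (k ! * poch b k) := by
  refine tsum_congr fun k => ?_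
  rw [Gamma_add_natCast_eq_poch hb]
  field_simp [(Real.Gamma_pos_of_pos hb).ne']

lemma measurable_hyp0F1R (b : ℝ) : Measurable (hyp0F1R b) :=
  Measurable.tsum fun k => by fun_prop

lemma integral_abs_pow_gammaMeasure (hb : 0 < b) (m : ℕ) :
    ∫ u, |u| ^ m ∂gammaMeasure b 1 = poch b m := by
  rw [← integral_pow_gammaMeasure hb, integral_gammaMeasure hb, integral_gammaMeasure hb]
  congr 1
  exact setIntegral_congr_fun measurableSet_Ioi fun u hu => by rw [abs_of_pos hu]

lemma pow_mul_hyp0F1R_eq_tsum (hb : 0 < b) (a : ℝ) (i : ℕ) (s : ℝ) :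
    s ^ i * hyp0F1R b (a * s) = ∑' k : ℕ, a ^ k / (k ! * poch b k) * s ^ (k + i) := by
  rw [hyp0F1R_eq_tsum_poch hb, ← tsum_mul_left]
  exact tsum_congr fun k => by ring

lemma div_factorial_mul_poch_mul_poch (hb : 0 < b) (c : ℝ) (k i : ℕ) :
    c / (k ! * poch b k) * poch b (k + i) = c / k ! * poch (b + k) i := by
  rw [poch_add]
  field_simp [(poch_pos hb k).ne']

lemma summable_integral_norm_pow_mul_hyp0F1R_term (hb : 0 < b) (a : ℝ) (i : ℕ) :
    Summable fun k : ℕ => ∫ s, ‖a ^ k / (k ! * poch b k) * s ^ (k + i)‖ ∂gammaMeasure b 1 := by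
  have hterm (k : ℕ) : ∫ s, ‖a ^ k / (k ! * poch b k) * s ^ (k + i)‖ ∂gammaMeasure b 1 =
      |a| ^ k / k ! * poch (b + k) i := by
    simp only [norm_mul, norm_div, norm_pow, Real.norm_eq_abs, Nat.abs_cast,
      abs_of_pos (poch_pos hb k)]
    rw [integral_const_mul, integral_abs_pow_gammaMeasure hb,
      div_factorial_mul_poch_mul_poch hb]
  simpa only [hterm] using (hasSum_pow_div_factorial_mul_poch hb |a| i).summable

lemma integrable_pow_mul_hyp0F1R (hb : 0 < b) (a : ℝ) (i : ℕ) :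
    Integrable (fun s => s ^ i * hyp0F1R b (a * s)) (gammaMeasure b 1) := by
  simp only [pow_mul_hyp0F1R_eq_tsum hb]
  exact integrable_tsum_of_summable_integral_norm
    (fun k => (integrable_pow_gammaMeasure hb _).const_mul _)
    (summable_integral_norm_pow_mul_hyp0F1R_term hb a i)

lemma integral_pow_mul_hyp0F1R (hb : 0 < b) (a : ℝ) (i : ℕ) :
    ∫ s, s ^ i * hyp0F1R b (a * s) ∂gammaMeasure b 1 =
      Real.exp a * (poch b i * (kummerPoly b i).eval (-a)) := by
  simp only [pow_mul_hyp0F1R_eq_tsum hb]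
  have hsum := hasSum_integral_of_summable_integral_norm
    (fun k => (integrable_pow_gammaMeasure hb (k + i)).const_mul (a ^ k / (k ! * poch b k)))
    (summable_integral_norm_pow_mul_hyp0F1R_term hb a i)
  simp only [integral_const_mul, integral_pow_gammaMeasure hb,
    div_factorial_mul_poch_mul_poch hb] at hsum
  exact hsum.unique (hasSum_pow_div_factorial_mul_poch hb a i)

end GammaExpectationHyp0F1

section MellinConvolution

open Set

variable {f : ℝ → ℝ} {T : ℝ}

lemma pow_mul_comp_div_eq (f : ℝ → ℝ) (hT : 0 < T) (i : ℕ) (x : ℝ) :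
    x ^ i * f (x / T) = T ^ i * ((T⁻¹ * x) ^ i * f (T⁻¹ * x)) := by
  rw [div_eq_inv_mul, ← mul_assoc, ← mul_pow, mul_inv_cancel_left₀ hT.ne']

lemma integrableOn_pow_mul_comp_div {i : ℕ} (hf : IntegrableOn (fun s => s ^ i * f s) (Ioi 0))
    (hT : 0 < T) : IntegrableOn (fun x => x ^ i * f (x / T)) (Ioi 0) := by
  simp only [pow_mul_comp_div_eq f hT]
  refine Integrable.const_mul ?_ _
  rwa [← IntegrableOn, integrableOn_Ioi_comp_mul_left_iff (fun s => s ^ i * f s) 0 (inv_pos.2 hT),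
    mul_zero]

lemma integral_pow_mul_comp_div (f : ℝ → ℝ) (hT : 0 < T) (i : ℕ) :
    ∫ x in Ioi 0, x ^ i * f (x / T) = T ^ (i + 1) * ∫ s in Ioi 0, s ^ i * f s := by
  simp only [pow_mul_comp_div_eq f hT]
  rw [integral_const_mul, integral_comp_mul_left_Ioi (fun s => s ^ i * f s) 0 (inv_pos.2 hT),
    mul_zero, inv_inv, smul_eq_mul]
  ring

lemma measurableSet_univ_pi_Ioi {ι : Type*} [Countable ι] :
    MeasurableSet (univ.pi fun _ : ι => Ioi (0 : ℝ)) :=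
  MeasurableSet.univ_pi fun _ => measurableSet_Ioi

variable {ι : Type*} [Fintype ι] {w : ι → ℝ → ℝ} {i : ℕ}

lemma restrict_univ_pi_Ioi :
    (volume : Measure (ι → ℝ)).restrict (univ.pi fun _ => Ioi 0) =
      Measure.pi fun _ => volume.restrict (Ioi 0) := by
  rw [volume_pi, Measure.restrict_pi_pi]

lemma prod_pos_of_mem_univ_pi_Ioi {t : ι → ℝ} (ht : t ∈ univ.pi fun _ => Ioi 0) :
    0 < ∏ l, t l :=
  Finset.prod_pos fun l _ => ht l (mem_univ l)

lemma integral_norm_prod_mul_pow_mul_comp_div (w : ι → ℝ → ℝ) (f : ℝ → ℝ) (i : ℕ) {t : ι → ℝ}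
    (ht : t ∈ univ.pi fun _ => Ioi 0) :
    ∫ x in Ioi 0, ‖(∏ l, w l (t l)) * (x ^ i * f (x / ∏ l, t l))‖ =
      (∏ l, ‖t l ^ (i + 1) * w l (t l)‖) * ∫ s in Ioi 0, s ^ i * |f s| := by
  have hT := prod_pos_of_mem_univ_pi_Ioi ht
  calc ∫ x in Ioi 0, ‖(∏ l, w l (t l)) * (x ^ i * f (x / ∏ l, t l))‖
      = ∫ x in Ioi 0, |∏ l, w l (t l)| * (x ^ i * |f (x / ∏ l, t l)|) :=
        setIntegral_congr_fun measurableSet_Ioi fun x hx => by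
          simp only [norm_mul, norm_pow, Real.norm_eq_abs, abs_of_pos (mem_Ioi.1 hx)]
    _ = |∏ l, w l (t l)| * (|∏ l, t l| ^ (i + 1) * ∫ s in Ioi 0, s ^ i * |f s|) := by
        rw [integral_const_mul, integral_pow_mul_comp_div (fun s => |f s|) hT, abs_of_pos hT]
    _ = (∏ l, ‖t l ^ (i + 1) * w l (t l)‖) * ∫ s in Ioi 0, s ^ i * |f s| := by
        simp only [Real.norm_eq_abs, abs_mul, abs_pow, Finset.abs_prod, Finset.prod_mul_distrib,
          Finset.prod_pow]
        ring

lemma integrable_prod_mul_pow_mul_comp_div (hfm : Measurable f) (hwm : ∀ l, Measurable (w l))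
    (hw : ∀ l, IntegrableOn (fun t => t ^ (i + 1) * w l t) (Ioi 0))
    (hf : IntegrableOn (fun s => s ^ i * f s) (Ioi 0)) :
    Integrable (fun p : ℝ × (ι → ℝ) => (∏ l, w l (p.2 l)) * (p.1 ^ i * f (p.1 / ∏ l, p.2 l)))
      ((volume.restrict (Ioi 0)).prod (volume.restrict (univ.pi fun _ => Ioi 0))) := by
  have hmeas : Measurable fun p : ℝ × (ι → ℝ) =>
      (∏ l, w l (p.2 l)) * (p.1 ^ i * f (p.1 / ∏ l, p.2 l)) := by fun_prop
  rw [integrable_prod_iff' hmeas.aestronglyMeasurable]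
  constructor
  · filter_upwards [ae_restrict_mem measurableSet_univ_pi_Ioi] with t ht
    exact (integrableOn_pow_mul_comp_div hf (prod_pos_of_mem_univ_pi_Ioi ht)).const_mul _
  · refine (integrableOn_congr_fun
      (fun t ht => integral_norm_prod_mul_pow_mul_comp_div w f i ht)
      measurableSet_univ_pi_Ioi).2 (Integrable.mul_const ?_ _)
    rw [restrict_univ_pi_Ioi]
    exact Integrable.fintype_prod (f := fun l t => ‖t ^ (i + 1) * w l t‖) fun l => (hw l).norm

lemma integral_pow_mul_mellinConvolution (hfm : Measurable f) (hwm : ∀ l, Measurable (w l))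
    (hw : ∀ l, IntegrableOn (fun t => t ^ (i + 1) * w l t) (Ioi 0))
    (hf : IntegrableOn (fun s => s ^ i * f s) (Ioi 0)) :
    ∫ x in Ioi 0, x ^ i * ∫ t in univ.pi fun _ : ι => Ioi 0, (∏ l, w l (t l)) * f (x / ∏ l, t l) =
      (∏ l, ∫ t in Ioi 0, t ^ (i + 1) * w l t) * ∫ s in Ioi 0, s ^ i * f s := by
  have hscale : EqOn
      (fun t : ι → ℝ => ∫ x in Ioi 0, (∏ l, w l (t l)) * (x ^ i * f (x / ∏ l, t l)))
      (fun t => (∏ l, t l ^ (i + 1) * w l (t l)) * ∫ s in Ioi 0, s ^ i * f s)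
      (univ.pi fun _ => Ioi 0) := fun t ht => by
    dsimp only
    rw [integral_const_mul, integral_pow_mul_comp_div f (prod_pos_of_mem_univ_pi_Ioi ht),
      Finset.prod_mul_distrib, Finset.prod_pow]
    ring
  simp only [← integral_const_mul (_ ^ i), mul_left_comm (_ ^ i)]
  rw [integral_integral_swap (integrable_prod_mul_pow_mul_comp_div hfm hwm hw hf),
    setIntegral_congr_fun measurableSet_univ_pi_Ioi hscale,
    integral_mul_const, restrict_univ_pi_Ioi,
    integral_fintype_prod_eq_prod fun l t => t ^ (i + 1) * w l t]

end MellinConvolution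

section MomentsOfPhi

open Set

lemma posOrth_eq_univ_pi (r : ℕ) : posOrth r = univ.pi fun _ => Ioi 0 := by
  ext t
  simp [posOrth]

lemma integrableOn_pow_mul_rpow_mul_exp_neg (n i : ℕ) :
    IntegrableOn (fun t => t ^ (i + 1) * (t ^ ((n : ℝ) - 1) * Real.exp (-t))) (Ioi 0) := by
  simp only [mul_comm (_ ^ (i + 1))]
  exact integrableOn_rpow_mul_exp_neg_mul_pow (by positivity)

lemma integral_pow_mul_rpow_mul_exp_neg (n i : ℕ) :
    ∫ t in Ioi 0, t ^ (i + 1) * (t ^ ((n : ℝ) - 1) * Real.exp (-t)) =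
      Real.Gamma (n + 1 + i) := by
  simp only [mul_comm (_ ^ (i + 1))]
  rw [integral_rpow_mul_exp_neg_mul_pow (by positivity), Nat.cast_succ, add_assoc, add_comm 1]

lemma integrableOn_pow_mul_pow_mul_exp_neg_mul_hyp0F1R (n i : ℕ) (v : ℝ) :
    IntegrableOn (fun s => s ^ i * (s ^ n * Real.exp (-s) * hyp0F1R (n + 1) (-v * s)))
      (Ioi 0) := by
  simp only [mul_left_comm (_ ^ i)]
  exact (integrable_gammaMeasure_natCast_add_one_iff n _).1
    (integrable_pow_mul_hyp0F1R (by positivity) (-v) i)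

lemma integral_pow_mul_pow_mul_exp_neg_mul_hyp0F1R (n i : ℕ) (v : ℝ) :
    ∫ s in Ioi 0, s ^ i * (s ^ n * Real.exp (-s) * hyp0F1R (n + 1) (-v * s)) =
      Real.Gamma (n + 1) *
        (Real.exp (-v) * (poch (n + 1) i * (kummerPoly (n + 1) i).eval v)) := by
  have hmoment := integral_pow_mul_hyp0F1R (b := n + 1) (by positivity) (-v) i
  rw [integral_gammaMeasure_natCast_add_one, neg_neg,
    inv_mul_eq_iff_eq_mul₀ (Real.Gamma_pos_of_pos (by positivity)).ne'] at hmoment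
  simp only [mul_left_comm (_ ^ i), hmoment]

lemma integral_pow_mul_PhiR (r ν0 : ℕ) (ν : Fin r → ℕ) (v : ℝ) (i : ℕ) :
    ∫ x in Ioi 0, x ^ i * PhiR r ν0 ν v x =
      (∏ l, Real.Gamma (ν l + 1 + i)) *
        (Real.exp (-v) * (poch (ν0 + 1) i * (kummerPoly (ν0 + 1) i).eval v)) := by
  have hGamma : Real.Gamma ((ν0 : ℝ) + 1) ≠ 0 := (Real.Gamma_pos_of_pos (by positivity)).ne'
  have hconvolution := integral_pow_mul_mellinConvolution
    (f := fun s => s ^ ν0 * Real.exp (-s) * hyp0F1R (ν0 + 1) (-v * s))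
    (w := fun l t => t ^ ((ν l : ℝ) - 1) * Real.exp (-t)) (i := i)
    (by have := measurable_hyp0F1R (ν0 + 1); fun_prop) (fun l => by fun_prop)
    (fun l => integrableOn_pow_mul_rpow_mul_exp_neg (ν l) i)
    (integrableOn_pow_mul_pow_mul_exp_neg_mul_hyp0F1R ν0 i v)
  simp only [integral_pow_mul_rpow_mul_exp_neg, integral_pow_mul_pow_mul_exp_neg_mul_hyp0F1R]
    at hconvolution
  simp only [PhiR, posOrth_eq_univ_pi, mul_left_comm (_ ^ i) (1 / Real.Gamma _)]
  simp only [neg_mul, mul_assoc] at hconvolution ⊢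
  rw [integral_const_mul, hconvolution]
  field_simp

end MomentsOfPhi

section LaguerreExpansionOfPsi

open Nat Polynomial ProbabilityTheory Set

/-- The coefficient of `kummerPoly (ν₀ + 1) k` in the Laguerre expansion of
`u ↦ Γ(ν₀ + 1) Ψ(u; x)`. -/
def psiCoeff {r : ℕ} (ν : Fin r → ℕ) (x : ℝ) (k : ℕ) : ℝ :=
  x ^ k / k ! * ∏ l, 1 / Real.Gamma (ν l + 1 + k)

variable {r : ℕ} (ν0 : ℕ) (ν : Fin r → ℕ) (x : ℝ)

lemma Psi_eq_tsum_psiCoeff_mul_kummerPoly (u : ℝ) :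
    Psi r ν0 ν u x =
      (Real.Gamma (ν0 + 1))⁻¹ * ∑' k, psiCoeff ν x k * (kummerPoly (ν0 + 1) k).eval u := by
  simp only [Psi, psiCoeff, hyp1F1T_eq_eval_kummerPoly, one_div (Real.Gamma (ν0 + 1)),
    mul_right_comm]

lemma one_le_Gamma_natCast_add_one_add (n k : ℕ) : 1 ≤ Real.Gamma (n + 1 + k) := by
  rw [add_right_comm, ← Nat.cast_add, Real.Gamma_nat_eq_factorial]
  exact_mod_cast Nat.one_le_iff_ne_zero.2 (factorial_ne_zero _)

lemma summable_abs_psiCoeff : Summable fun k => |psiCoeff ν x k| := by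
  refine (Real.summable_pow_div_factorial |x|).of_nonneg_of_le (fun k => abs_nonneg _) fun k => ?_
  have hprod : |∏ l, 1 / Real.Gamma (ν l + 1 + k)| ≤ 1 := by
    rw [Finset.abs_prod]
    refine Finset.prod_le_one (fun l _ => abs_nonneg _) fun l _ => ?_
    have hGamma := one_le_Gamma_natCast_add_one_add (ν l) k
    rw [abs_of_pos (by positivity)]
    exact div_le_one_of_le₀ hGamma (by positivity)
  rw [psiCoeff, abs_mul, abs_div, abs_pow, Nat.abs_cast]
  exact mul_le_of_le_one_right (by positivity) hprod

lemma integrable_tsum_psiCoeff_mul_eval (P : ℝ[X]) :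
    Integrable (fun u => (∑' k, psiCoeff ν x k * (kummerPoly (ν0 + 1) k).eval u) * P.eval u)
      (gammaMeasure (ν0 + 1) 1) :=
  integrable_tsum_mul_of_memLp_two (summable_abs_psiCoeff ν x)
    (fun k => memLp_two_eval_gammaMeasure (by positivity) _)
    (integral_kummerPoly_sq_le_one (by simp)) (memLp_two_eval_gammaMeasure (by positivity) P)

lemma integral_tsum_psiCoeff_mul_kummerPoly (i : ℕ) :
    ∫ u, (∑' k, psiCoeff ν x k * (kummerPoly (ν0 + 1) k).eval u) * (kummerPoly (ν0 + 1) i).eval u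
        ∂gammaMeasure (ν0 + 1) 1 = psiCoeff ν x i * (i ! / poch (ν0 + 1) i) := by
  have hb : (0 : ℝ) < ν0 + 1 := by positivity
  have hsum := hasSum_integral_tsum_mul_of_memLp_two (summable_abs_psiCoeff ν x)
    (fun k => memLp_two_eval_gammaMeasure hb (kummerPoly (ν0 + 1) k))
    (integral_kummerPoly_sq_le_one (by simp))
    (memLp_two_eval_gammaMeasure hb (kummerPoly (ν0 + 1) i))
  simp only [integral_kummerPoly_mul_kummerPoly hb] at hsum
  refine hsum.unique ?_
  have hsingle := hasSum_single (f := fun k => psiCoeff ν x k *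
    if k = i then (i ! : ℝ) / poch (ν0 + 1) i else 0) i fun k hk => by simp [hk]
  simpa only [if_pos] using hsingle

lemma integrableOn_Psi_mul_eval (P : ℝ[X]) :
    IntegrableOn (fun u => u ^ ν0 * Real.exp (-u) * Psi r ν0 ν u x * P.eval u) (Ioi 0) := by
  simp only [Psi_eq_tsum_psiCoeff_mul_kummerPoly, mul_assoc, mul_left_comm _ (Real.Gamma _)⁻¹]
  have hint := (integrable_gammaMeasure_natCast_add_one_iff ν0 _).1
    (integrable_tsum_psiCoeff_mul_eval ν0 ν x P)
  simp only [mul_assoc] at hint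
  exact hint.const_mul _

lemma integral_Psi_mul_kummerPoly (i : ℕ) :
    ∫ u in Ioi 0, u ^ ν0 * Real.exp (-u) * Psi r ν0 ν u x * (kummerPoly (ν0 + 1) i).eval u =
      psiCoeff ν x i * (i ! / poch (ν0 + 1) i) := by
  rw [← integral_tsum_psiCoeff_mul_kummerPoly, integral_gammaMeasure_natCast_add_one,
    ← integral_const_mul]
  congr 1 with u
  rw [Psi_eq_tsum_psiCoeff_mul_kummerPoly]
  ring

lemma pow_eq_integral_Psi_mul_kummerPoly (i : ℕ) :
    x ^ i = (∏ l, Real.Gamma (ν l + 1 + i)) * (poch (ν0 + 1) i *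
      ∫ u in Ioi 0, u ^ ν0 * Real.exp (-u) * Psi r ν0 ν u x *
        (kummerPoly (ν0 + 1) i).eval u) := by
  have hpoch := (poch_pos (b := (ν0 : ℝ) + 1) (by positivity) i).ne'
  have hGamma : ∏ l, Real.Gamma (ν l + 1 + i) ≠ 0 :=
    Finset.prod_ne_zero_iff.2 fun l _ => (Real.Gamma_pos_of_pos (by positivity)).ne'
  rw [integral_Psi_mul_kummerPoly, psiCoeff, Finset.prod_div_distrib, Finset.prod_const_one]
  field_simp

end LaguerreExpansionOfPsi

section Biorthogonality

open Finset Polynomial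

lemma eval_eq_sum_eval_mul_eval_basis {F ι : Type*} [Field F] [DecidableEq ι] {s : Finset ι}
    {v : ι → F} (hv : Set.InjOn v s) {P : F[X]} (hP : P.degree < #s) (u : F) :
    P.eval u = ∑ j ∈ s, P.eval (v j) * (Lagrange.basis s v j).eval u := by
  conv_lhs => rw [Lagrange.eq_interpolate hv hP]
  simp [Lagrange.interpolate_apply, eval_finsetSum]

lemma eval_basis_neg {F ι : Type*} [Field F] [DecidableEq ι] (s : Finset ι) (a : ι → F) (j : ι)
    (u : F) : (Lagrange.basis s (fun l => -a l) j).eval u =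
      ∏ l ∈ s.erase j, (-u - a l) / (a j - a l) := by
  rw [Lagrange.basis, eval_prod]
  refine prod_congr rfl fun l _ => ?_
  have hnum : -u - a l = -(u - -a l) := by ring
  have hden : a j - a l = -(-a j - -a l) := by ring
  rw [hnum, hden, neg_div_neg_eq, div_eq_inv_mul]
  simp [Lagrange.basisDivisor]

variable {r N : ℕ} (ν0 : ℕ) (ν : Fin r → ℕ) (a : Fin N → ℝ)

/-- The function `η_j ∈ span {1, x, …, x^(N-1)}` dual to `ξ_j = Φ(-a_j; ·)`, so that
`K_N(x, y) = ∑_j η_j(x) ξ_j(y)`. The Lagrange factor of the kernel is encoded as Mathlib's basis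
polynomial for the nodes `-a_l`. -/
def dualPhi (j : Fin N) (x : ℝ) : ℝ :=
  Real.exp (-a j) * ∫ u in Set.Ioi 0, u ^ ν0 * Real.exp (-u) * Psi r ν0 ν u x *
    (Lagrange.basis univ (fun l => -a l) j).eval u

variable {a}

lemma sum_mul_integral_Psi_mul_eval_basis (ha : Function.Injective a) {P : ℝ[X]}
    (hP : P.degree < N) (x : ℝ) :
    ∑ j, P.eval (-a j) * ∫ u in Set.Ioi 0, u ^ ν0 * Real.exp (-u) * Psi r ν0 ν u x *
      (Lagrange.basis univ (fun l => -a l) j).eval u =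
    ∫ u in Set.Ioi 0, u ^ ν0 * Real.exp (-u) * Psi r ν0 ν u x * P.eval u := by
  have hinterpolate (u : ℝ) : u ^ ν0 * Real.exp (-u) * Psi r ν0 ν u x * P.eval u =
      ∑ j, P.eval (-a j) * (u ^ ν0 * Real.exp (-u) * Psi r ν0 ν u x *
        (Lagrange.basis univ (fun l => -a l) j).eval u) := by
    rw [eval_eq_sum_eval_mul_eval_basis (s := univ) (v := fun l => -a l)
      (neg_injective.comp ha).injOn (by simpa using hP) u,
      mul_sum]
    exact sum_congr rfl fun j _ => mul_left_comm _ _ _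
  simp only [hinterpolate]
  rw [integral_finsetSum _ fun j _ => (integrableOn_Psi_mul_eval ν0 ν x _).const_mul _]
  simp only [integral_const_mul]

lemma sum_integral_pow_mul_PhiR_mul_dualPhi (ha : Function.Injective a) (i : Fin N) (x : ℝ) :
    ∑ j, (∫ y in Set.Ioi 0, y ^ (i : ℕ) * PhiR r ν0 ν (-a j) y) * dualPhi ν0 ν a j x =
      x ^ (i : ℕ) := by
  have hdegree : (kummerPoly (ν0 + 1) i).degree < N :=
    degree_le_natDegree.trans_lt
      (by exact_mod_cast (natDegree_kummerPoly_le _ _).trans_lt i.isLt)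
  rw [pow_eq_integral_Psi_mul_kummerPoly ν0 ν,
    ← sum_mul_integral_Psi_mul_eval_basis ν0 ν ha hdegree, mul_sum, mul_sum]
  refine sum_congr rfl fun j _ => ?_
  have hexp : Real.exp (a j) * Real.exp (-a j) = 1 := by rw [← Real.exp_add]; simp
  rw [integral_pow_mul_PhiR, dualPhi, neg_neg]
  grind

lemma kernel_eq_sum_dualPhi_mul_PhiR (x y : ℝ) :
    ∫ u in Set.Ioi 0, u ^ ν0 * Real.exp (-u) * Psi r ν0 ν u x *
        ∑ j, PhiR r ν0 ν (-a j) y * Real.exp (-a j) *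
          ∏ l ∈ univ.erase j, (-u - a l) / (a j - a l) =
      ∑ j, dualPhi ν0 ν a j x * PhiR r ν0 ν (-a j) y := by
  have hsplit (u : ℝ) : u ^ ν0 * Real.exp (-u) * Psi r ν0 ν u x *
        ∑ j, PhiR r ν0 ν (-a j) y * Real.exp (-a j) *
          ∏ l ∈ univ.erase j, (-u - a l) / (a j - a l) =
      ∑ j, PhiR r ν0 ν (-a j) y * Real.exp (-a j) * (u ^ ν0 * Real.exp (-u) * Psi r ν0 ν u x *
        (Lagrange.basis univ (fun l => -a l) j).eval u) := by
    rw [mul_sum]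
    exact sum_congr rfl fun j _ => by rw [eval_basis_neg, mul_left_comm]
  simp only [hsplit]
  rw [integral_finsetSum _ fun j _ => (integrableOn_Psi_mul_eval ν0 ν x _).const_mul _]
  simp only [integral_const_mul]
  exact sum_congr rfl fun j _ => by rw [dualPhi]; ring

variable {g : Matrix (Fin N) (Fin N) ℝ}

lemma of_pow_eq_mul_of_dualPhi (ha : Function.Injective a)
    (hg : ∀ i j, g i j = ∫ y in Set.Ioi 0, y ^ (i : ℕ) * PhiR r ν0 ν (-a j) y) (x : Fin N → ℝ) :
    (Matrix.of fun i j : Fin N => x j ^ (i : ℕ)) =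
      g * Matrix.of fun i j => dualPhi ν0 ν a i (x j) := by
  ext i j
  simp only [Matrix.mul_apply, Matrix.of_apply, hg,
    sum_integral_pow_mul_PhiR_mul_dualPhi ν0 ν ha]

lemma det_moments_ne_zero (ha : Function.Injective a)
    (hg : ∀ i j, g i j = ∫ y in Set.Ioi 0, y ^ (i : ℕ) * PhiR r ν0 ν (-a j) y) : g.det ≠ 0 := by
  have hnodes : Function.Injective fun j : Fin N => (j : ℝ) :=
    Nat.cast_injective.comp Fin.val_injective
  have hvandermonde := Matrix.det_vandermonde_ne_zero_iff.2 hnodes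
  have hfactor : (Matrix.vandermonde fun j : Fin N => (j : ℝ)).transpose = g * _ :=
    of_pow_eq_mul_of_dualPhi ν0 ν ha hg fun j => j
  rw [← Matrix.det_transpose, hfactor, Matrix.det_mul] at hvandermonde
  exact left_ne_zero_of_mul hvandermonde

end Biorthogonality

theorem prop_2_1_general (r ν0 N : ℕ) (ν : Fin r → ℕ) (a : Fin N → ℝ)
    (hdist : Function.Injective a)
    (g : Matrix (Fin N) (Fin N) ℝ)
    (hg : ∀ i j, g i j = ∫ x in Set.Ioi (0 : ℝ), x ^ (i : ℕ) * PhiR r ν0 ν (-(a j)) x)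
    (Z : ℝ) (hZ : Z = (Nat.factorial N : ℝ) * g.det)
    (K : ℝ → ℝ → ℝ)
    (hK : ∀ x y : ℝ, 0 < x → 0 < y → K x y = ∫ u in Set.Ioi (0 : ℝ),
      u ^ ν0 * Real.exp (-u) * Psi r ν0 ν u x *
        ∑ j, PhiR r ν0 ν (-(a j)) y * Real.exp (-(a j)) *
          ∏ l ∈ Finset.univ.erase j, (-u - a l) / (a j - a l))
    (x : Fin N → ℝ) (hx : ∀ i, 0 < x i) :
    (1 / Z) * (Matrix.of fun i j : Fin N => x j ^ (i : ℕ)).det *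
        (Matrix.of fun i j : Fin N => PhiR r ν0 ν (-(a i)) (x j)).det =
      (1 / (Nat.factorial N : ℝ)) * (Matrix.of fun i j : Fin N => K (x i) (x j)).det := by
  have hdet : g.det ≠ 0 := det_moments_ne_zero ν0 ν hdist hg
  have hkernel : (Matrix.of fun i j => K (x i) (x j)) =
      (Matrix.of fun i j => dualPhi ν0 ν a i (x j)).transpose *
        Matrix.of fun i j => PhiR r ν0 ν (-a i) (x j) := by
    ext i j
    simp only [Matrix.mul_apply, Matrix.transpose_apply, Matrix.of_apply,
      hK _ _ (hx i) (hx j), kernel_eq_sum_dualPhi_mul_PhiR]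
  rw [hZ, of_pow_eq_mul_of_dualPhi ν0 ν hdist hg, hkernel, Matrix.det_mul, Matrix.det_mul,
    Matrix.det_transpose]
  field_simp

/-- **Proposition 2.1** (correlation-kernel form of the eigenvalue density, residue form). -/
theorem prop_2_1 (r ν0 N : ℕ) (ν : Fin r → ℕ) (a : Fin N → ℝ)
    (ha : ∀ j, 0 < a j) (hdist : Function.Injective a)
    (g : Matrix (Fin N) (Fin N) ℝ)
    (hg : ∀ i j, g i j = ∫ x in Set.Ioi (0 : ℝ), x ^ (i : ℕ) * PhiR r ν0 ν (-(a j)) x)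
    (hdet : g.det ≠ 0)
    (Z : ℝ) (hZ : Z = (Nat.factorial N : ℝ) * g.det)
    (K : ℝ → ℝ → ℝ)
    (hK : ∀ x y : ℝ, K x y = ∫ u in Set.Ioi (0 : ℝ),
      u ^ ν0 * Real.exp (-u) * Psi r ν0 ν u x *
        ∑ j, PhiR r ν0 ν (-(a j)) y * Real.exp (-(a j)) *
          ∏ l ∈ Finset.univ.erase j, (-u - a l) / (a j - a l))
    (x : Fin N → ℝ) (hx : ∀ i, 0 < x i) :
    (1 / Z) * (Matrix.of fun i j : Fin N => x j ^ (i : ℕ)).det *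
        (Matrix.of fun i j : Fin N => PhiR r ν0 ν (-(a i)) (x j)).det =
      (1 / (Nat.factorial N : ℝ)) * (Matrix.of fun i j : Fin N => K (x i) (x j)).det :=
  prop_2_1_general r ν0 N ν a hdist g hg Z hZ K (fun x y _ _ => hK x y) x hx

end
end

section
/- Proposition 2.5, formula (2.30) (average of the reciprocal characteristic polynomial for a biorthogonal ensemble with monomial functions). For every z ∈ ℂ at positive distance from I, ∫_{I^N} ∏_{l=1}^N (z−x_l)^{−1} Q_N(x₁,…,x_N) dx₁⋯dx_N = ∫_I (z−u)^{−1} ( ∑_{j=1}^N c_{N,j} ξ_j(u) ) du, where c_{i,j} denotes the (i,j) entry of the transposed inverse of the matrix [g_{ij}]_{i,j=1}^N. -/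
open MeasureTheory Filter Topology

noncomputable section


open scoped Matrix

/-! Andréief's identity turns `∫ det (φ i (x j)) * det (ψ i (x j))` into `N!` times the
determinant of the pairings `∫ φ i * ψ j`. The factor `∏ l, (z - x l)⁻¹` only changes the last row
of the Vandermonde determinant `det (x j ^ i)`: the values `(z - x j)⁻¹` are interpolated by a
polynomial of degree at most `N - 1` whose leading coefficient is `∏ l, (z - x l)⁻¹`, so replacing
the last row by these values multiplies the determinant by that product. Hence the average is a
quotient of two determinants of pairings that differ in their last row, which Cramer's rule
evaluates. -/

section Determinants

variable {ι R K : Type*} [Fintype ι] [DecidableEq ι] [CommRing R] [Field K] {n : ℕ}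

theorem det_updateRow_vecMul (A : Matrix ι ι R) (i : ι) (c : ι → R) :
    (A.updateRow i (c ᵥ* A)).det = c i * A.det := by
  rw [Matrix.vecMul_eq_sum, Matrix.det_updateRow_sum, smul_eq_mul]

theorem det_updateRow_eq_vecMul_inv_mul_det {A : Matrix ι ι R} (hA : IsUnit A.det) (i : ι)
    (b : ι → R) : (A.updateRow i b).det = (b ᵥ* A⁻¹) i * A.det := by
  rw [← det_updateRow_vecMul, Matrix.vecMul_vecMul, Matrix.nonsing_inv_mul A hA,
    Matrix.vecMul_one]

theorem map_nonsing_inv {L : Type*} [Field L] (f : K →+* L) (A : Matrix ι ι K) :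
    A⁻¹.map f = (A.map f)⁻¹ := by
  have hadj : (A.map f).adjugate = A.adjugate.map f := (f.map_adjugate A).symm
  have hdet : (A.map f).det = f A.det := (f.map_det A).symm
  ext i j
  simp only [Matrix.inv_def, Ring.inverse_eq_inv', hadj, hdet, Matrix.map_apply,
    Matrix.smul_apply, smul_eq_mul, map_mul, map_inv₀]

theorem coeff_vecMul_transpose_vandermonde {p : Polynomial R} (hp : p.natDegree ≤ n)
    (x : Fin (n + 1) → R) :
    (fun i : Fin (n + 1) => p.coeff i) ᵥ* (Matrix.vandermonde x)ᵀ = fun j => p.eval (x j) := by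
  ext j
  rw [Polynomial.eval_eq_sum_range' (Nat.lt_succ_of_le hp), Finset.sum_range]
  rfl

theorem det_transpose_vandermonde_updateRow_eval {p : Polynomial R} (hp : p.natDegree ≤ n)
    (x : Fin (n + 1) → R) :
    ((Matrix.vandermonde x)ᵀ.updateRow (Fin.last n) fun j => p.eval (x j)).det =
      p.coeff n * (Matrix.vandermonde x)ᵀ.det := by
  rw [← coeff_vecMul_transpose_vandermonde hp, det_updateRow_vecMul, Fin.val_last]

theorem exists_monic_eval_eq_prod_sub_mul_inv_sub {x : Fin (n + 1) → K} {z : K}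
    (hz : ∀ l, x l ≠ z) :
    ∃ p : Polynomial K, p.Monic ∧ p.natDegree = n ∧
      ∀ j, p.eval (x j) = (∏ l, (z - x l)) * (z - x j)⁻¹ := by
  -- With `W = ∏ l, (X - x l)`, take the quotient in `W = (X - z) * p + W(z)`.
  set W := Lagrange.nodal Finset.univ x with hW
  have hdeg : W.natDegree = n + 1 := by simp [hW]
  have hmonic : (W /ₘ (Polynomial.X - Polynomial.C z)).Monic := by
    rw [Polynomial.Monic, Polynomial.leadingCoeff_divByMonic_X_sub_C]
    · exact Lagrange.nodal_monic
    · exact (Polynomial.degree_eq_natDegree Lagrange.nodal_ne_zero).trans_ne (by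
        rw [hdeg]; exact_mod_cast n.succ_ne_zero)
  refine ⟨W /ₘ (Polynomial.X - Polynomial.C z), hmonic, ?_, fun j => ?_⟩
  · rw [Polynomial.natDegree_divByMonic _ (Polynomial.monic_X_sub_C z), hdeg,
      Polynomial.natDegree_X_sub_C, Nat.add_sub_cancel]
  · have hdivision := congrArg (Polynomial.eval (x j))
      (Polynomial.modByMonic_add_div W (Polynomial.X - Polynomial.C z))
    rw [Polynomial.modByMonic_X_sub_C_eq_C_eval, hW,
      Lagrange.eval_nodal_at_node (Finset.mem_univ j)] at hdivision
    simp only [Polynomial.eval_add, Polynomial.eval_C, Polynomial.eval_mul, Polynomial.eval_sub,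
      Polynomial.eval_X, Lagrange.eval_nodal] at hdivision
    rw [eq_mul_inv_iff_mul_eq₀ (sub_ne_zero.2 (hz j).symm)]
    linear_combination -hdivision

theorem det_transpose_vandermonde_updateRow_inv_sub {x : Fin (n + 1) → K} {z : K}
    (hz : ∀ l, x l ≠ z) :
    ((Matrix.vandermonde x)ᵀ.updateRow (Fin.last n) fun j => (z - x j)⁻¹).det =
      (∏ l, (z - x l)⁻¹) * (Matrix.vandermonde x)ᵀ.det := by
  obtain ⟨p, hmonic, hdeg, heval⟩ := exists_monic_eval_eq_prod_sub_mul_inv_sub hz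
  have hprod : ∏ l, (z - x l) ≠ 0 :=
    Finset.prod_ne_zero_iff.2 fun l _ => sub_ne_zero.2 (hz l).symm
  have hrow : (fun j => p.eval (x j)) = (∏ l, (z - x l)) • fun j => (z - x j)⁻¹ := funext heval
  have hcoeff : p.coeff n = 1 := hdeg ▸ hmonic.coeff_natDegree
  have hdet := det_transpose_vandermonde_updateRow_eval hdeg.le x
  rw [hrow, Matrix.det_updateRow_smul, hcoeff, one_mul] at hdet
  rw [Finset.prod_inv_distrib, eq_inv_mul_iff_mul_eq₀ hprod, hdet]

end Determinants

section BiorthogonalEnsembles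

variable {ι α 𝕜 : Type*}

/-- The matrix `[φ_i(x_j)]` of values of a family of functions at a family of points. -/
def evalMatrix (φ : ι → α → 𝕜) (x : ι → α) : Matrix ι ι 𝕜 :=
  Matrix.of fun i j => φ i (x j)

theorem evalMatrix_update [DecidableEq ι] (φ : ι → α → 𝕜) (i : ι) (h : α → 𝕜) (x : ι → α) :
    evalMatrix (Function.update φ i h) x = (evalMatrix φ x).updateRow i fun j => h (x j) := by
  ext k j
  rcases eq_or_ne k i with rfl | hk
  · simp [evalMatrix]
  · simp [evalMatrix, hk]

theorem det_evalMatrix_mul_det_evalMatrix [Fintype ι] [DecidableEq ι] [CommRing 𝕜]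
    (φ ψ : ι → α → 𝕜) (x : ι → α) :
    (evalMatrix φ x).det * (evalMatrix ψ x).det =
      ∑ τ : Equiv.Perm ι, ((Equiv.Perm.sign τ : ℤ) : 𝕜) *
        (Matrix.of fun i j => φ i (x j) * ψ (τ j) (x j)).det := by
  rw [Matrix.det_apply' (evalMatrix ψ x), Finset.mul_sum]
  refine Finset.sum_congr rfl fun τ _ => ?_
  have hcol := Matrix.det_mul_row (fun j => ψ (τ j) (x j)) (evalMatrix φ x)
  simp only [evalMatrix, Matrix.of_apply, mul_comm (ψ _ _)] at hcol ⊢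
  rw [hcol]
  ring

/-- The powers `1, f, f², …, f^(n-1)` of a function, indexed from `0` by `Fin n`. -/
def powers [Monoid 𝕜] (n : ℕ) (f : α → 𝕜) : Fin n → α → 𝕜 :=
  fun i u => f u ^ (i : ℕ)

theorem evalMatrix_powers [CommRing 𝕜] {n : ℕ} (f : α → 𝕜) (x : Fin n → α) :
    evalMatrix (powers n f) x = (Matrix.vandermonde fun j => f (x j))ᵀ :=
  rfl

variable [MeasurableSpace α] [RCLike 𝕜]

/-- The matrix `[∫ φ_i ψ_j dμ]` of pairings of two families of functions, without complex
conjugation. -/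
def pairingMatrix (μ : Measure α) (φ ψ : ι → α → 𝕜) : Matrix ι ι 𝕜 :=
  Matrix.of fun i j => ∫ u, φ i u * ψ j u ∂μ

theorem pairingMatrix_update [DecidableEq ι] (μ : Measure α) (φ ψ : ι → α → 𝕜) (i : ι)
    (h : α → 𝕜) :
    pairingMatrix μ (Function.update φ i h) ψ =
      (pairingMatrix μ φ ψ).updateRow i fun j => ∫ u, h u * ψ j u ∂μ := by
  ext k j
  rcases eq_or_ne k i with rfl | hk
  · simp [pairingMatrix]
  · simp [pairingMatrix, hk]

/-- The density of the biorthogonal ensemble of the families `φ` and `ψ` with respect to the product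
measure `μ^ι`. It need not be nonnegative, and it vanishes identically if the pairing matrix is
singular. -/
def biorthogonalDensity [Fintype ι] [DecidableEq ι] (μ : Measure α) (φ ψ : ι → α → 𝕜)
    (x : ι → α) : 𝕜 :=
  ((Fintype.card ι).factorial * (pairingMatrix μ φ ψ).det)⁻¹ *
    (evalMatrix φ x).det * (evalMatrix ψ x).det

theorem prod_inv_sub_mul_biorthogonalDensity {n : ℕ} (μ : Measure α) {f : α → 𝕜}
    (ψ : Fin (n + 1) → α → 𝕜) {z : 𝕜} {x : Fin (n + 1) → α} (hz : ∀ l, f (x l) ≠ z) :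
    (∏ l, (z - f (x l))⁻¹) * biorthogonalDensity μ (powers (n + 1) f) ψ x =
      ((n + 1).factorial * (pairingMatrix μ (powers (n + 1) f) ψ).det)⁻¹ *
        (((evalMatrix (powers (n + 1) f) x).updateRow (Fin.last n) fun j => (z - f (x j))⁻¹).det *
          (evalMatrix ψ x).det) := by
  rw [evalMatrix_powers, det_transpose_vandermonde_updateRow_inv_sub hz, biorthogonalDensity,
    evalMatrix_powers, Fintype.card_fin]
  ring

section ColumnwiseDeterminant

variable [Fintype ι] [DecidableEq ι] {β : ι → Type*} [∀ j, MeasurableSpace (β j)]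
  {ν : ∀ j, Measure (β j)} [∀ j, SigmaFinite (ν j)] {M : ι → ∀ j, β j → 𝕜}

theorem integrable_det_pi (hM : ∀ i j, Integrable (M i j) (ν j)) :
    Integrable (fun x => (Matrix.of fun i j => M i j (x j)).det) (Measure.pi ν) := by
  simp only [Matrix.det_apply', Matrix.of_apply]
  exact integrable_finsetSum _ fun σ _ =>
    (Integrable.fintype_prod_dep fun j => hM (σ j) j).const_mul _

theorem integral_det_pi (hM : ∀ i j, Integrable (M i j) (ν j)) :
    ∫ x, (Matrix.of fun i j => M i j (x j)).det ∂Measure.pi ν =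
      (Matrix.of fun i j => ∫ u, M i j u ∂ν j).det := by
  simp only [Matrix.det_apply', Matrix.of_apply]
  rw [integral_finsetSum _ fun σ _ =>
    (Integrable.fintype_prod_dep fun j => hM (σ j) j).const_mul _]
  simp only [integral_const_mul, integral_fintype_prod_eq_prod]

end ColumnwiseDeterminant

variable {μ : Measure α}

theorem integrable_inv_sub_mul {f h : α → 𝕜} {z : 𝕜} {δ : ℝ} (hf : AEMeasurable f μ)
    (hh : Integrable h μ) (hδ : 0 < δ) (hz : ∀ᵐ u ∂μ, δ ≤ ‖z - f u‖) :
    Integrable (fun u => (z - f u)⁻¹ * h u) μ := by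
  refine hh.bdd_mul (c := δ⁻¹) (hf.const_sub z).inv.aestronglyMeasurable ?_
  filter_upwards [hz] with u hu
  rw [norm_inv]
  exact inv_anti₀ hδ hu

theorem integral_mul_sum_const_mul [Fintype ι] {ψ : ι → α → 𝕜} {h : α → 𝕜} (c : ι → 𝕜)
    (hh : ∀ j, Integrable (fun u => h u * ψ j u) μ) :
    ∫ u, h u * ∑ j, c j * ψ j u ∂μ = ∑ j, (∫ u, h u * ψ j u ∂μ) * c j := by
  simp only [Finset.mul_sum, mul_left_comm (h _), mul_comm (∫ _, _ ∂μ)]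
  rw [integral_finsetSum _ fun j _ => (hh j).const_mul _]
  simp only [integral_const_mul]

section Andreief

variable [SigmaFinite μ] [Fintype ι] [DecidableEq ι] {φ ψ : ι → α → 𝕜}

/-- Andréief's identity. -/
theorem integral_det_evalMatrix_mul_det_evalMatrix
    (hint : ∀ i j, Integrable (fun u => φ i u * ψ j u) μ) :
    ∫ x, (evalMatrix φ x).det * (evalMatrix ψ x).det ∂(Measure.pi fun _ => μ) =
      (Fintype.card ι).factorial * (pairingMatrix μ φ ψ).det := by
  have hterm (τ : Equiv.Perm ι) :
      ((Equiv.Perm.sign τ : ℤ) : 𝕜) * ∫ x : ι → α,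
        (Matrix.of fun i j => φ i (x j) * ψ (τ j) (x j)).det ∂(Measure.pi fun _ => μ) =
      (pairingMatrix μ φ ψ).det := by
    have hperm : (Matrix.of fun i j => ∫ u, φ i u * ψ (τ j) u ∂μ).det =
        (Equiv.Perm.sign τ : ℤ) * (pairingMatrix μ φ ψ).det :=
      Matrix.det_permute' τ (pairingMatrix μ φ ψ)
    rw [integral_det_pi fun i j => hint i (τ j), hperm, ← mul_assoc, ← Int.cast_mul,
      ← Units.val_mul, Int.units_mul_self, Units.val_one, Int.cast_one, one_mul]
  simp only [det_evalMatrix_mul_det_evalMatrix]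
  rw [integral_finsetSum _ fun τ _ => (integrable_det_pi fun i j => hint i (τ j)).const_mul _]
  simp only [integral_const_mul, hterm]
  rw [Finset.sum_const, Finset.card_univ, Fintype.card_perm, nsmul_eq_mul]

theorem integral_det_updateRow_mul_det {i : ι} {h : α → 𝕜}
    (hint : ∀ k ≠ i, ∀ j, Integrable (fun u => φ k u * ψ j u) μ)
    (hh : ∀ j, Integrable (fun u => h u * ψ j u) μ) :
    ∫ x, ((evalMatrix φ x).updateRow i fun j => h (x j)).det * (evalMatrix ψ x).det
        ∂(Measure.pi fun _ => μ) =
      (Fintype.card ι).factorial *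
        ((pairingMatrix μ φ ψ).updateRow i fun j => ∫ u, h u * ψ j u ∂μ).det := by
  simp only [← evalMatrix_update, ← pairingMatrix_update]
  refine integral_det_evalMatrix_mul_det_evalMatrix fun k j => ?_
  rcases eq_or_ne k i with rfl | hk
  · simpa only [Function.update_self] using hh j
  · simpa only [Function.update_of_ne hk] using hint k hk j

theorem integral_det_updateRow_mul_det_eq_mul_integral {i : ι} {h : α → 𝕜}
    (hint : ∀ k ≠ i, ∀ j, Integrable (fun u => φ k u * ψ j u) μ)
    (hh : ∀ j, Integrable (fun u => h u * ψ j u) μ) (hdet : (pairingMatrix μ φ ψ).det ≠ 0) :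
    ∫ x, ((evalMatrix φ x).updateRow i fun j => h (x j)).det * (evalMatrix ψ x).det
        ∂(Measure.pi fun _ => μ) =
      (Fintype.card ι).factorial * (pairingMatrix μ φ ψ).det *
        ∫ u, h u * ∑ j, (pairingMatrix μ φ ψ)⁻¹ j i * ψ j u ∂μ := by
  rw [integral_det_updateRow_mul_det hint hh, det_updateRow_eq_vecMul_inv_mul_det hdet.isUnit,
    integral_mul_sum_const_mul _ hh, mul_comm _ (pairingMatrix μ φ ψ).det, ← mul_assoc]
  rfl

end Andreief

theorem integral_prod_inv_sub_mul_biorthogonalDensity [SigmaFinite μ] {n : ℕ} {f : α → 𝕜}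
    {ξ : Fin (n + 1) → α → 𝕜} {z : 𝕜}
    (hint : ∀ i j, Integrable (fun u => powers (n + 1) f i u * ξ j u) μ)
    (hdet : (pairingMatrix μ (powers (n + 1) f) ξ).det ≠ 0)
    (hz : ∀ᵐ u ∂μ, f u ≠ z)
    (hres : ∀ j, Integrable (fun u => (z - f u)⁻¹ * ξ j u) μ) :
    ∫ x, (∏ l, (z - f (x l))⁻¹) * biorthogonalDensity μ (powers (n + 1) f) ξ x
        ∂(Measure.pi fun _ => μ) =
      ∫ u, (z - f u)⁻¹ *
        ∑ j, (pairingMatrix μ (powers (n + 1) f) ξ)⁻¹ j (Fin.last n) * ξ j u ∂μ := by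
  have hz_pi : ∀ᵐ x ∂(Measure.pi fun _ : Fin (n + 1) => μ), ∀ l, f (x l) ≠ z :=
    eventually_all.2 fun l =>
      (Measure.tendsto_eval_ae_ae (μ := fun _ : Fin (n + 1) => μ) (i := l)).eventually hz
  have hnorm : ((n + 1).factorial * (pairingMatrix μ (powers (n + 1) f) ξ).det : 𝕜) ≠ 0 :=
    mul_ne_zero (Nat.cast_ne_zero.2 (Nat.factorial_ne_zero _)) hdet
  rw [integral_congr_ae (hz_pi.mono fun x hx => prod_inv_sub_mul_biorthogonalDensity μ ξ hx),
    integral_const_mul,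
    integral_det_updateRow_mul_det_eq_mul_integral (fun k _ => hint k) hres hdet,
    Fintype.card_fin, inv_mul_cancel_left₀ hnorm]

end BiorthogonalEnsembles

section OfReal

variable {ι α : Type*}

theorem powers_ofReal (n : ℕ) (f : α → ℝ) :
    powers n (fun u => (f u : ℂ)) = fun i u => ((powers n f i u : ℝ) : ℂ) := by
  ext i u
  exact (Complex.ofReal_pow _ _).symm

theorem det_evalMatrix_ofReal [Fintype ι] [DecidableEq ι] (φ : ι → α → ℝ) (x : ι → α) :
    (evalMatrix (fun i u => (φ i u : ℂ)) x).det = ((evalMatrix φ x).det : ℂ) :=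
  (Complex.ofRealHom.map_det (evalMatrix φ x)).symm

variable [MeasurableSpace α] (μ : Measure α) (φ ψ : ι → α → ℝ)

theorem pairingMatrix_ofReal :
    pairingMatrix μ (fun i u => (φ i u : ℂ)) (fun j u => (ψ j u : ℂ)) =
      (pairingMatrix μ φ ψ).map Complex.ofRealHom := by
  ext i j
  simp only [pairingMatrix, Matrix.of_apply, Matrix.map_apply, ← Complex.ofReal_mul,
    integral_complex_ofReal, Complex.ofRealHom_eq_coe]

variable [Fintype ι] [DecidableEq ι]

theorem det_pairingMatrix_ofReal :
    (pairingMatrix μ (fun i u => (φ i u : ℂ)) (fun j u => (ψ j u : ℂ))).det =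
      ((pairingMatrix μ φ ψ).det : ℂ) := by
  rw [pairingMatrix_ofReal]
  exact (Complex.ofRealHom.map_det _).symm

theorem inv_pairingMatrix_ofReal_apply (i j : ι) :
    (pairingMatrix μ (fun i u => (φ i u : ℂ)) (fun j u => (ψ j u : ℂ)))⁻¹ i j =
      ((pairingMatrix μ φ ψ)⁻¹ i j : ℂ) := by
  rw [pairingMatrix_ofReal, ← map_nonsing_inv]
  rfl

theorem biorthogonalDensity_ofReal (x : ι → α) :
    biorthogonalDensity μ (fun i u => (φ i u : ℂ)) (fun j u => (ψ j u : ℂ)) x =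
      ((biorthogonalDensity μ φ ψ x : ℝ) : ℂ) := by
  simp only [biorthogonalDensity, det_evalMatrix_ofReal, det_pairingMatrix_ofReal]
  push_cast
  rfl

end OfReal

theorem prop_2_5_reciprocal_general {α : Type*} [MeasurableSpace α] {μ : Measure α} [SigmaFinite μ]
    {n : ℕ} {f : α → ℝ} {ξ : Fin (n + 1) → α → ℝ} {z : ℂ}
    (hint : ∀ i j, Integrable (fun u => powers (n + 1) f i u * ξ j u) μ)
    (hdet : (pairingMatrix μ (powers (n + 1) f) ξ).det ≠ 0)
    (hz : ∀ᵐ u ∂μ, (f u : ℂ) ≠ z)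
    (hres : ∀ j, Integrable (fun u => (z - f u)⁻¹ * (ξ j u : ℂ)) μ) :
    ∫ x, (∏ l, (z - f (x l))⁻¹) * ((biorthogonalDensity μ (powers (n + 1) f) ξ x : ℝ) : ℂ)
        ∂(Measure.pi fun _ => μ) =
      ∫ u, (z - f u)⁻¹ *
        ((∑ j, (pairingMatrix μ (powers (n + 1) f) ξ)⁻¹ j (Fin.last n) * ξ j u : ℝ) : ℂ) ∂μ := by
  have hcomplex := integral_prod_inv_sub_mul_biorthogonalDensity (μ := μ) (z := z)
    (f := fun u => (f u : ℂ)) (ξ := fun j u => (ξ j u : ℂ))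
  simp only [powers_ofReal, biorthogonalDensity_ofReal, det_pairingMatrix_ofReal,
    inv_pairingMatrix_ofReal_apply, ← Complex.ofReal_mul, ← Complex.ofReal_sum] at hcomplex
  exact hcomplex (fun i j => (hint i j).ofReal) (Complex.ofReal_ne_zero.2 hdet) hz hres

/-- **Proposition 2.5, formula (2.30)** (average of the reciprocal characteristic
polynomial for a biorthogonal ensemble with monomial functions). -/
theorem prop_2_5_reciprocal (n : ℕ) (I : Set ℝ) (hI : I.OrdConnected)
    (hIm : MeasurableSet I)
    (ξ : Fin (n + 1) → ℝ → ℝ) (hmeas : ∀ j, Measurable (ξ j))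
    (hint : ∀ i j : Fin (n + 1), IntegrableOn (fun x => |x| ^ (i : ℕ) * |ξ j x|) I)
    (g : Matrix (Fin (n + 1)) (Fin (n + 1)) ℝ)
    (hg : ∀ i j, g i j = ∫ x in I, x ^ (i : ℕ) * ξ j x)
    (hdet : g.det ≠ 0)
    (Q : (Fin (n + 1) → ℝ) → ℝ)
    (hQ : ∀ x, Q x = (1 / ((Nat.factorial (n + 1) : ℝ) * g.det)) *
      (Matrix.of fun i j : Fin (n + 1) => x j ^ (i : ℕ)).det *
      (Matrix.of fun i j : Fin (n + 1) => ξ i (x j)).det)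
    (z : ℂ) (δ : ℝ) (hδ : 0 < δ) (hzI : ∀ x ∈ I, δ ≤ ‖z - (x : ℂ)‖) :
    ∫ x in {x : Fin (n + 1) → ℝ | ∀ l, x l ∈ I},
        (∏ l, (z - (x l : ℂ))⁻¹) * ((Q x : ℝ) : ℂ) =
      ∫ u in I, (z - (u : ℂ))⁻¹ *
        ((∑ j, g⁻¹ j (Fin.last n) * ξ j u : ℝ) : ℂ) := by
  have hcube : (volume : Measure (Fin (n + 1) → ℝ)).restrict {x | ∀ l, x l ∈ I} =
      Measure.pi fun _ => volume.restrict I := by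
    rw [← Measure.restrict_pi_pi, ← volume_pi]
    congr 1
    ext x
    simp
  have hdist : ∀ᵐ u : ℝ ∂volume.restrict I, δ ≤ ‖z - (u : ℂ)‖ := ae_restrict_of_forall_mem hIm hzI
  have hz : ∀ᵐ u : ℝ ∂volume.restrict I, (u : ℂ) ≠ z := hdist.mono fun u hu =>
    (sub_ne_zero.1 (norm_pos_iff.1 (hδ.trans_le hu))).symm
  have hmoment (i j) : IntegrableOn (fun u => powers (n + 1) id i u * ξ j u) I :=
    (integrable_norm_iff ((measurable_id.pow_const _).mul (hmeas j)).aestronglyMeasurable).1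
      (by simpa [powers, IntegrableOn] using hint i j)
  have hξ (j) : IntegrableOn (ξ j) I := by simpa [powers] using hmoment 0 j
  obtain rfl : g = pairingMatrix (volume.restrict I) (powers (n + 1) id) ξ := Matrix.ext hg
  obtain rfl : Q = biorthogonalDensity (volume.restrict I) (powers (n + 1) id) ξ :=
    funext fun x => (hQ x).trans (by rw [biorthogonalDensity, Fintype.card_fin, one_div]; rfl)
  have hres (j) : IntegrableOn (fun u : ℝ => (z - (u : ℂ))⁻¹ * (ξ j u : ℂ)) I :=
    integrable_inv_sub_mul Complex.measurable_ofReal.aemeasurable (hξ j).ofReal hδ hdist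
  simpa only [hcube, id_eq] using prop_2_5_reciprocal_general hmoment hdet hz hres

end
end

section
/- Proposition 2.5, formula (2.32) (average characteristic polynomial for a biorthogonal ensemble with monomial functions). Suppose in addition there is a measurable ξ_{N+1} : I → ℝ such that x ↦ |x|^{i−1}|ξ_j(x)| is integrable on I for all 1 ≤ i,j ≤ N+1, and that the matrix G̃ := [g_{ij}]_{i,j=1}^{N+1} with g_{ij} := ∫_I x^{i−1} ξ_j(x) dx is invertible; let c̃ := (G̃^{−1})^T and assume c̃_{N+1,N+1} ≠ 0. Then for every x ∈ ℝ, ∫_{I^N} ∏_{l=1}^N (x−x_l) Q_N(x₁,…,x_N) dx₁⋯dx_N = (1/c̃_{N+1,N+1}) ∑_{j=1}^{N+1} c̃_{j,N+1} x^{j−1}; in particular the average characteristic polynomial is a monic polynomial of degree N that does not depend on ξ_{N+1}. -/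
open MeasureTheory Filter Topology

noncomputable section


/-!
The factor `∏ (z - x_l)` turns the Vandermonde determinant of the `x_l` into the one with the extra
node `z`. Its column `(z^i)` is constant in the `x_l`, so Andréief's identity, applied to each
cofactor of that column, integrates the other columns: the average is the determinant of `G̃` with
its last column replaced by `(z^i)`, divided by the leading `N × N` minor. By Cramer's rule both
determinants are `det G̃` times an expression in the last row of `G̃⁻¹`.
-/

section Determinants

variable {R : Type*} [CommRing R]

theorem det_mul_det_eq_sum_perm_sum_perm {ι α : Type*} [Fintype ι] [DecidableEq ι]
    (φ ξ : ι → α → R) (x : ι → α) :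
    (Matrix.of fun i j => φ i (x j)).det * (Matrix.of fun i j => ξ i (x j)).det =
      ∑ σ : Equiv.Perm ι, ∑ τ : Equiv.Perm ι, ((σ.sign : ℤ) : R) * ((τ.sign : ℤ) : R) *
        ∏ j, φ (σ j) (x j) * ξ (τ j) (x j) := by
  simp only [Matrix.det_apply', Matrix.of_apply, Finset.sum_mul_sum, Finset.prod_mul_distrib,
    mul_mul_mul_comm]

theorem sum_perm_sum_perm_sign_mul_prod {ι : Type*} [Fintype ι] [DecidableEq ι]
    (A : Matrix ι ι R) :
    ∑ σ : Equiv.Perm ι, ∑ τ : Equiv.Perm ι, ((σ.sign : ℤ) : R) * ((τ.sign : ℤ) : R) *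
        ∏ j, A (σ j) (τ j) = (Fintype.card ι).factorial * A.det := by
  have sum_eq_det (τ : Equiv.Perm ι) :
      ∑ σ : Equiv.Perm ι, ((σ.sign : ℤ) : R) * ((τ.sign : ℤ) : R) * ∏ j, A (σ j) (τ j) =
        A.det := calc
    _ = ((τ.sign : ℤ) : R) * (A.submatrix id τ).det := by
      simp only [Matrix.det_apply', Finset.mul_sum, Matrix.submatrix_apply, id_eq, mul_left_comm,
        mul_assoc]
    _ = A.det := by
      rw [Matrix.det_permute', ← mul_assoc, ← Int.cast_mul, Int.units_coe_mul_self, Int.cast_one,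
        one_mul]
  rw [Finset.sum_comm, Fintype.sum_congr _ _ sum_eq_det, Finset.sum_const, Finset.card_univ,
    Fintype.card_perm, nsmul_eq_mul]

variable {n : ℕ}

/-- The bordered matrix `[A | u]`, with `u` as its last column; it keeps the constant column of the
extended Vandermonde matrix apart from those depending on the integration variables. -/
def appendCol {m β : Type*} (A : Matrix m (Fin n) β) (u : m → β) : Matrix m (Fin (n + 1)) β :=
  Matrix.of fun i => Fin.snoc (A i) (u i)

theorem det_appendCol (A : Matrix (Fin (n + 1)) (Fin n) R) (u : Fin (n + 1) → R) :
    (appendCol A u).det =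
      ∑ i : Fin (n + 1), (-1) ^ (i + n : ℕ) * u i * (A.submatrix i.succAbove id).det := by
  have minor_eq (i : Fin (n + 1)) : (appendCol A u).submatrix i.succAbove (Fin.last n).succAbove =
      A.submatrix i.succAbove id := by
    ext k l
    simp [appendCol]
  rw [Matrix.det_succ_column _ (Fin.last n)]
  refine Fintype.sum_congr _ _ fun i => ?_
  rw [minor_eq]
  simp [appendCol]

theorem transpose_vandermonde_snoc (v : Fin n → R) (z : R) :
    (Matrix.vandermonde (Fin.snoc v z : Fin (n + 1) → R)).transpose =
      appendCol (Matrix.of fun (i : Fin (n + 1)) j => v j ^ (i : ℕ)) fun i => z ^ (i : ℕ) := by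
  ext i j
  refine Fin.lastCases ?_ (fun l => ?_) j <;> simp [appendCol]

theorem det_vandermonde_snoc (v : Fin n → R) (z : R) :
    (Matrix.vandermonde (Fin.snoc v z : Fin (n + 1) → R)).det =
      (∏ l, (z - v l)) * (Matrix.vandermonde v).det := by
  have prod_Ioi_eq_prod_Iio {m : ℕ} (w : Fin m → R) :
      ∏ i, ∏ j ∈ Finset.Ioi i, (w j - w i) = ∏ j, ∏ i ∈ Finset.Iio j, (w j - w i) :=
    Finset.prod_comm' (by simp)
  rw [Matrix.det_vandermonde, Matrix.det_vandermonde, prod_Ioi_eq_prod_Iio, prod_Ioi_eq_prod_Iio,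
    Fin.prod_univ_castSucc, mul_comm]
  simp [Fin.prod_Iio_castSucc, Fin.Iio_last_eq_map]

theorem prod_sub_mul_det_pow (v : Fin n → R) (z : R) :
    (∏ l, (z - v l)) * (Matrix.of fun i j : Fin n => v j ^ (i : ℕ)).det =
      (appendCol (Matrix.of fun (i : Fin (n + 1)) j => v j ^ (i : ℕ))
        fun i => z ^ (i : ℕ)).det := by
  rw [← transpose_vandermonde_snoc, Matrix.det_transpose, det_vandermonde_snoc,
    ← Matrix.det_transpose (Matrix.vandermonde v)]
  rfl

theorem det_appendCol_submatrix_castSucc (A : Matrix (Fin (n + 1)) (Fin (n + 1)) R)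
    (hA : IsUnit A.det) (u : Fin (n + 1) → R) :
    (appendCol (A.submatrix id Fin.castSucc) u).det =
      A.det * ∑ j, A⁻¹ (Fin.last n) j * u j := by
  have appendCol_eq : appendCol (A.submatrix id Fin.castSucc) u =
      A.updateCol (Fin.last n) u := by
    ext i j
    refine Fin.lastCases ?_ (fun l => ?_) j <;> simp [appendCol, Fin.castSucc_ne_last]
  rw [appendCol_eq, ← Matrix.cramer_apply, ← Matrix.det_smul_inv_mulVec_eq_cramer A u hA]
  rfl

theorem det_submatrix_castSucc (A : Matrix (Fin (n + 1)) (Fin (n + 1)) R)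
    (hA : IsUnit A.det) :
    (A.submatrix Fin.castSucc Fin.castSucc).det =
      A.det * A⁻¹ (Fin.last n) (Fin.last n) := by
  rw [Matrix.inv_def, Matrix.smul_apply, smul_eq_mul, Ring.mul_inverse_cancel_left _ _ hA,
    Matrix.adjugate_fin_succ_eq_det_submatrix, Fin.succAbove_last, Even.neg_one_pow ⟨_, rfl⟩,
    one_mul]

end Determinants

section Andreief

variable {𝕜 α : Type*} [RCLike 𝕜] [MeasurableSpace α] {μ : Measure α} [SigmaFinite μ]
  {ι : Type*} [Fintype ι] [DecidableEq ι] {φ ξ : ι → α → 𝕜}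

theorem integrable_sign_mul_prod (h : ∀ i j, Integrable (fun x => φ i x * ξ j x) μ)
    (σ τ : Equiv.Perm ι) :
    Integrable (fun x : ι → α => ((σ.sign : ℤ) : 𝕜) * ((τ.sign : ℤ) : 𝕜) *
      ∏ j, φ (σ j) (x j) * ξ (τ j) (x j)) (Measure.pi fun _ => μ) :=
  (Integrable.fintype_prod fun j => h (σ j) (τ j)).const_mul _

theorem integrable_det_mul_det (h : ∀ i j, Integrable (fun x => φ i x * ξ j x) μ) :
    Integrable (fun x : ι → α => (Matrix.of fun i j => φ i (x j)).det *
      (Matrix.of fun i j => ξ i (x j)).det) (Measure.pi fun _ => μ) := by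
  simp only [det_mul_det_eq_sum_perm_sum_perm]
  exact integrable_finsetSum _ fun σ _ => integrable_finsetSum _ fun τ _ =>
    integrable_sign_mul_prod h σ τ

/-- Andréief's identity. -/
theorem integral_det_mul_det (h : ∀ i j, Integrable (fun x => φ i x * ξ j x) μ) :
    ∫ x : ι → α, (Matrix.of fun i j => φ i (x j)).det *
        (Matrix.of fun i j => ξ i (x j)).det ∂(Measure.pi fun _ => μ) =
      (Fintype.card ι).factorial * (Matrix.of fun i j => ∫ x, φ i x * ξ j x ∂μ).det := by
  simp only [det_mul_det_eq_sum_perm_sum_perm]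
  rw [integral_finsetSum _ fun σ _ => integrable_finsetSum _ fun τ _ =>
    integrable_sign_mul_prod h σ τ, ← sum_perm_sum_perm_sign_mul_prod]
  refine Fintype.sum_congr _ _ fun σ => ?_
  rw [integral_finsetSum _ fun τ _ => integrable_sign_mul_prod h σ τ]
  refine Fintype.sum_congr _ _ fun τ => ?_
  rw [integral_const_mul, integral_fintype_prod_eq_prod fun j x => φ (σ j) x * ξ (τ j) x]
  rfl

theorem integral_det_appendCol_mul_det {n : ℕ} {φ : Fin (n + 1) → α → 𝕜} {ξ : Fin n → α → 𝕜}
    (h : ∀ i j, Integrable (fun x => φ i x * ξ j x) μ) (u : Fin (n + 1) → 𝕜) :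
    ∫ x : Fin n → α, (appendCol (Matrix.of fun i j => φ i (x j)) u).det *
        (Matrix.of fun i j => ξ i (x j)).det ∂(Measure.pi fun _ => μ) =
      n.factorial * (appendCol (Matrix.of fun i j => ∫ x, φ i x * ξ j x ∂μ) u).det := by
  have integrable_minor (i : Fin (n + 1)) :
      Integrable (fun x : Fin n → α =>
        ((Matrix.of fun i j => φ i (x j)).submatrix i.succAbove id).det *
          (Matrix.of fun i j => ξ i (x j)).det) (Measure.pi fun _ => μ) :=
    integrable_det_mul_det fun k => h (i.succAbove k)
  have integral_minor (i : Fin (n + 1)) :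
      ∫ x : Fin n → α, ((Matrix.of fun i j => φ i (x j)).submatrix i.succAbove id).det *
          (Matrix.of fun i j => ξ i (x j)).det ∂(Measure.pi fun _ => μ) =
        n.factorial *
          ((Matrix.of fun i j => ∫ x, φ i x * ξ j x ∂μ).submatrix i.succAbove id).det := by
    simpa only [Fintype.card_fin] using! integral_det_mul_det fun k => h (i.succAbove k)
  simp only [det_appendCol, Finset.sum_mul, mul_assoc ((-1) ^ _ * _ : 𝕜)]
  rw [integral_finsetSum _ fun i _ => (integrable_minor i).const_mul _]
  simp only [integral_const_mul, integral_minor, Finset.mul_sum, mul_left_comm]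

theorem integral_prod_sub_mul_det_pow_mul_det {n : ℕ} {f : α → 𝕜} {ξ : Fin n → α → 𝕜}
    (h : ∀ (i : Fin (n + 1)) j, Integrable (fun x => f x ^ (i : ℕ) * ξ j x) μ) (z : 𝕜) :
    ∫ x : Fin n → α, (∏ l, (z - f (x l))) *
        (Matrix.of fun i j : Fin n => f (x j) ^ (i : ℕ)).det *
        (Matrix.of fun i j => ξ i (x j)).det ∂(Measure.pi fun _ => μ) =
      n.factorial * (appendCol (Matrix.of fun (i : Fin (n + 1)) j =>
        ∫ x, f x ^ (i : ℕ) * ξ j x ∂μ) fun i => z ^ (i : ℕ)).det := by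
  simp only [prod_sub_mul_det_pow]
  exact integral_det_appendCol_mul_det h _

end Andreief

theorem volume_restrict_setOf_forall_mem {ι α : Type*} [Fintype ι] [MeasureSpace α]
    [SigmaFinite (volume : Measure α)] (s : Set α) :
    volume.restrict {x : ι → α | ∀ i, x i ∈ s} = Measure.pi fun _ => volume.restrict s := by
  rw [← Measure.restrict_pi_pi, ← volume_pi]
  congr 1
  ext x
  simp

theorem integrable_abs_pow_mul_abs_iff {μ : Measure ℝ} {g : ℝ → ℝ}
    (hg : AEStronglyMeasurable g μ) (k : ℕ) :
    Integrable (fun x => |x| ^ k * |g x|) μ ↔ Integrable (fun x => x ^ k * g x) μ := by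
  have hpow : AEStronglyMeasurable (fun x => x ^ k * g x) μ :=
    (continuous_pow k).aestronglyMeasurable.mul hg
  rw [← integrable_norm_iff hpow]
  simp only [norm_mul, norm_pow, Real.norm_eq_abs]

/-- Only the first `n` columns of `G` are tied to the functions `ξ`; leaving the last one free
expresses that the average characteristic polynomial does not depend on `ξ_{N+1}`. -/
theorem prop_2_5_characteristic_general {𝕜 α : Type*} [RCLike 𝕜] [MeasurableSpace α]
    (μ : Measure α) [SigmaFinite μ] (n : ℕ) (f : α → 𝕜) (ξ : Fin n → α → 𝕜)
    (hint : ∀ (i : Fin (n + 1)) j, Integrable (fun x => f x ^ (i : ℕ) * ξ j x) μ)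
    (G : Matrix (Fin (n + 1)) (Fin (n + 1)) 𝕜)
    (hG : ∀ i j, G i (Fin.castSucc j) = ∫ x, f x ^ (i : ℕ) * ξ j x ∂μ)
    (hdetN : (G.submatrix Fin.castSucc Fin.castSucc).det ≠ 0)
    (hdet : IsUnit G.det)
    (Q : (Fin n → α) → 𝕜)
    (hQ : ∀ x, Q x = (1 / ((Nat.factorial n : 𝕜) *
        (G.submatrix Fin.castSucc Fin.castSucc).det)) *
      (Matrix.of fun i j : Fin n => f (x j) ^ (i : ℕ)).det *
      (Matrix.of fun i j : Fin n => ξ i (x j)).det)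
    (z : 𝕜) :
    ∫ x : Fin n → α, (∏ l, (z - f (x l))) * Q x ∂(Measure.pi fun _ => μ) =
      (G⁻¹ (Fin.last n) (Fin.last n))⁻¹ *
        ∑ j : Fin (n + 1), G⁻¹ (Fin.last n) j * z ^ (j : ℕ) := by
  have moments : (Matrix.of fun (i : Fin (n + 1)) j => ∫ x, f x ^ (i : ℕ) * ξ j x ∂μ) =
      G.submatrix id Fin.castSucc := Matrix.ext fun i j => (hG i j).symm
  have integrand (x : Fin n → α) : (∏ l, (z - f (x l))) * Q x =
      1 / (Nat.factorial n * (G.submatrix Fin.castSucc Fin.castSucc).det) *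
        ((∏ l, (z - f (x l))) * (Matrix.of fun i j : Fin n => f (x j) ^ (i : ℕ)).det *
          (Matrix.of fun i j => ξ i (x j)).det) := by
    rw [hQ]
    ring
  simp only [integrand]
  rw [integral_const_mul, integral_prod_sub_mul_det_pow_mul_det hint, moments,
    det_appendCol_submatrix_castSucc G hdet, det_submatrix_castSucc G hdet]
  rw [det_submatrix_castSucc G hdet] at hdetN
  obtain ⟨hdet_ne, hcc⟩ := mul_ne_zero_iff.mp hdetN
  have factorial_ne : (Nat.factorial n : 𝕜) ≠ 0 := Nat.cast_ne_zero.mpr n.factorial_ne_zero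
  field_simp

/-- **Proposition 2.5, formula (2.32)** (average characteristic polynomial for a
biorthogonal ensemble with monomial functions). -/
theorem prop_2_5_characteristic (n : ℕ) (I : Set ℝ) (hI : I.OrdConnected)
    (hIm : MeasurableSet I)
    (ξ : Fin (n + 2) → ℝ → ℝ) (hmeas : ∀ j, Measurable (ξ j))
    (hint : ∀ i j : Fin (n + 2), IntegrableOn (fun x => |x| ^ (i : ℕ) * |ξ j x|) I)
    (gt : Matrix (Fin (n + 2)) (Fin (n + 2)) ℝ)
    (hgt : ∀ i j, gt i j = ∫ x in I, x ^ (i : ℕ) * ξ j x)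
    (hdetN : (gt.submatrix Fin.castSucc Fin.castSucc).det ≠ 0)
    (hdet : IsUnit gt.det)
    (hcc : gt⁻¹ (Fin.last (n + 1)) (Fin.last (n + 1)) ≠ 0)
    (Q : (Fin (n + 1) → ℝ) → ℝ)
    (hQ : ∀ x, Q x = (1 / ((Nat.factorial (n + 1) : ℝ) *
        (gt.submatrix Fin.castSucc Fin.castSucc).det)) *
      (Matrix.of fun i j : Fin (n + 1) => x j ^ (i : ℕ)).det *
      (Matrix.of fun i j : Fin (n + 1) => ξ (Fin.castSucc i) (x j)).det)
    (x0 : ℝ) :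
    ∫ x in {x : Fin (n + 1) → ℝ | ∀ l, x l ∈ I}, (∏ l, (x0 - x l)) * Q x =
      (gt⁻¹ (Fin.last (n + 1)) (Fin.last (n + 1)))⁻¹ *
        ∑ j : Fin (n + 2), gt⁻¹ (Fin.last (n + 1)) j * x0 ^ (j : ℕ) := by
  rw [volume_restrict_setOf_forall_mem]
  exact prop_2_5_characteristic_general _ (n + 1) (fun x => x) (fun j => ξ j.castSucc)
    (fun i j => (integrable_abs_pow_mul_abs_iff (hmeas _).aestronglyMeasurable i).1 (hint i _))
    gt (fun i j => hgt i j.castSucc) hdetN hdet Q hQ x0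

end
end
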